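/- arXiv:1911.09921 — 2 statements merged into one kernel-verified Lean document; each statement's English description precedes it below -/
import Mathlib

section
/- Let D be an unbounded domain in ℂⁿ for which p = ∞ is a psh peak point. Then for every r > 0 there exists a constant c > 0 such that S_D(z;X) ≥ c|X| (and hence also A_D(z;X) ≥ c|X| and K_D(z;X) ≥ c|X|) for all z ∈ D with |z| < r and all X ∈ ℂⁿ. -/
open Set Metric Filter Topology
open scoped Classical

noncomputable section

/-- `ℂⁿ` with the Euclidean norm. -/
abbrev Cn (n : ℕ) := EuclideanSpace ℂ (Fin n)

/-- A function `u : ℂⁿ → [-∞,∞)` (with values in `EReal`) is plurisubharmonic on `D` if it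
is upper semicontinuous on `D` and satisfies the sub-mean-value inequality on every closed
disc in a complex line contained in `D` (stated via continuous majorants on the boundary
circle, so as to handle the value `-∞`). -/
def PSHOn {n : ℕ} (u : Cn n → EReal) (D : Set (Cn n)) : Prop :=
  UpperSemicontinuousOn u D ∧
  ∀ a ∈ D, ∀ b : Cn n, ∀ r : ℝ, 0 < r →
    (∀ t : ℂ, ‖t‖ ≤ r → a + t • b ∈ D) →
    ∀ g : ℝ → ℝ, Continuous g →
      (∀ θ : ℝ, u (a + ((r : ℂ) * Complex.exp (θ * Complex.I)) • b) ≤ (g θ : EReal)) →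
      u a ≤ (((1 / (2 * Real.pi)) * ∫ θ in (0:ℝ)..(2 * Real.pi), g θ : ℝ) : EReal)

/-- `φ` is a psh peak function for the unbounded domain `D` at `p = ∞`:
`φ` is psh on `D`, `φ(z) → 0` as `|z| → ∞` in `D`, and `sup_{D∖U} φ < 0` for every
neighborhood `U` of `∞` (i.e. every set of the cobounded filter). -/
def IsPshPeakFnAtInfty {n : ℕ} (D : Set (Cn n)) (φ : Cn n → EReal) : Prop :=
  PSHOn φ D ∧ Tendsto φ (Bornology.cobounded (Cn n) ⊓ 𝓟 D) (𝓝 (0 : EReal)) ∧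
  ∀ U ∈ Bornology.cobounded (Cn n), ∃ c : ℝ, c < 0 ∧ ∀ z ∈ D \ U, φ z ≤ (c : EReal)

/-- The real exponential extended to `EReal`, with `exp(-∞) = 0` (the value at `⊤`,
irrelevant here, is also set to `0`). -/
def erexp (x : EReal) : ℝ := if x = ⊥ then 0 else if x = ⊤ then 0 else Real.exp x.toReal

/-- The Kobayashi metric of `D`:
`K_D(z;X) = inf {|α| : ∃ f : 𝔻 → D holomorphic, f 0 = z, α • f' 0 = X}`. -/
def kobayashi {n : ℕ} (D : Set (Cn n)) (z X : Cn n) : ℝ :=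
  sInf {c : ℝ | ∃ α : ℂ, c = ‖α‖ ∧ ∃ f : ℂ → Cn n,
    DifferentiableOn ℂ f (ball (0:ℂ) 1) ∧ MapsTo f (ball (0:ℂ) 1) D ∧
    f 0 = z ∧ α • deriv f 0 = X}

/-- The pluricomplex Green function of `D` with pole at `z`:
`g_D(z,w) = sup {u(w) : u psh on D, u < 0, u ≤ log‖·-z‖ + C near z for some C}`. -/
def greenFn {n : ℕ} (D : Set (Cn n)) (z w : Cn n) : EReal :=
  sSup {t : EReal | ∃ u : Cn n → EReal, PSHOn u D ∧ (∀ x ∈ D, u x < 0) ∧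
    (∃ C : ℝ, ∀ᶠ x in 𝓝[D] z, u x ≤ ((Real.log ‖x - z‖ + C : ℝ) : EReal)) ∧ t = u w}

/-- The Azukawa metric of `D`:
`A_D(z;X) = limsup_{λ→0, λ≠0} exp(g_D(z, z+λX)) / |λ|`. -/
def azukawa {n : ℕ} (D : Set (Cn n)) (z X : Cn n) : ℝ :=
  Filter.limsup (fun lam : ℂ => erexp (greenFn D z (z + lam • X)) / ‖lam‖) (𝓝[≠] (0:ℂ))

/-- Logarithm with values in `EReal`, so that `elog 0 = -∞`. -/
def elog (x : ℝ) : EReal := if x ≤ 0 then ⊥ else ((Real.log x : ℝ) : EReal)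

/-- The Levi form of a real-valued `C²` function `v` at `z` in direction `X`:
`L_v(z;X) = Σ_{j,k} ∂²v/∂z_j∂z̄_k(z) X_j X̄_k`, expressed through the real second
derivative via `Σ_{j,k} ∂²v/∂z_j∂z̄_k(z) X_j X̄_k = (D²v(z)(X,X) + D²v(z)(iX,iX))/4`. -/
def leviForm {n : ℕ} (v : Cn n → ℝ) (z X : Cn n) : ℝ :=
  (1/4) * (iteratedFDeriv ℝ 2 v z ![X, X] +
    iteratedFDeriv ℝ 2 v z ![Complex.I • X, Complex.I • X])

/-- The Sibony metric of `D`: `S_D(z;X) = sup_v (L_v(z;X))^{1/2}`, the supremum over all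
`v : D → [0,1)` with `v(z) = 0`, `log v` psh on `D`, and `v` of class `C²` near `z`. -/
def sibony {n : ℕ} (D : Set (Cn n)) (z X : Cn n) : ℝ :=
  sSup {s : ℝ | ∃ v : Cn n → ℝ, (∀ w ∈ D, 0 ≤ v w ∧ v w < 1) ∧ v z = 0 ∧
    PSHOn (fun w => elog (v w)) D ∧ (∃ W ∈ 𝓝 z, ContDiffOn ℝ 2 v W) ∧
    s = Real.sqrt (leviForm v z X)}

/-- local sub-mean value property at a point on small circles -/
def LocalSub {n : ℕ} (u : Cn n → EReal) (a : Cn n) : Prop :=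
  ∀ b : Cn n, ∃ ρ₀ : ℝ, 0 < ρ₀ ∧ ∀ ρ : ℝ, 0 < ρ → ρ < ρ₀ →
    ∀ g : ℝ → ℝ, Continuous g →
      (∀ θ : ℝ, u (a + ((ρ : ℂ) * Complex.exp (θ * Complex.I)) • b) ≤ (g θ : EReal)) →
      u a ≤ (((1 / (2 * Real.pi)) * ∫ θ in (0:ℝ)..(2 * Real.pi), g θ : ℝ) : EReal)

lemma norm_circ {ρ : ℝ} (hρ : 0 < ρ) (θ : ℝ) :
    ‖(ρ : ℂ) * Complex.exp (θ * Complex.I)‖ = ρ := by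
  rw [norm_mul, Complex.norm_exp_ofReal_mul_I, mul_one, Complex.norm_real, Real.norm_eq_abs,
    abs_of_pos hρ]

lemma exists_ball_line {n : ℕ} {D : Set (Cn n)} {a : Cn n} (h : D ∈ 𝓝 a) (b : Cn n) :
    ∃ ρ₀ : ℝ, 0 < ρ₀ ∧ ∀ t : ℂ, ‖t‖ < ρ₀ → a + t • b ∈ D := by
  have hc : ContinuousAt (fun t : ℂ => a + t • b) 0 := by fun_prop
  have h2 : (fun t : ℂ => a + t • b) ⁻¹' D ∈ 𝓝 (0:ℂ) := hc (by simpa using h)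
  obtain ⟨ε, hε, h3⟩ := Metric.mem_nhds_iff.1 h2
  exact ⟨ε, hε, fun t ht => h3 (by simpa using ht)⟩

lemma PSHOn.localSub {n : ℕ} {u : Cn n → EReal} {D : Set (Cn n)} (hu : PSHOn u D)
    (hD : IsOpen D) {a : Cn n} (ha : a ∈ D) : LocalSub u a := by
  intro b
  obtain ⟨ρ₀, h0, h1⟩ := exists_ball_line (hD.mem_nhds ha) b
  exact ⟨ρ₀, h0, fun ρ hρ hlt g hg h => hu.2 a ha b ρ hρ
    (fun t ht => h1 t (ht.trans_lt hlt)) g hg h⟩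

lemma LocalSub.congr {n : ℕ} {u v : Cn n → EReal} {a : Cn n} (hu : LocalSub u a)
    (h : ∀ᶠ w in 𝓝 a, v w = u w) : LocalSub v a := by
  intro b
  obtain ⟨ρ₀, h0, h1⟩ := exists_ball_line h b
  obtain ⟨ρ₁, h2, h3⟩ := hu b
  refine ⟨min ρ₀ ρ₁, lt_min h0 h2, fun ρ hρ hlt g hg hh => ?_⟩
  have : v a = u a := h.self_of_nhds
  rw [this]
  refine h3 ρ hρ (hlt.trans_le (min_le_right _ _)) g hg fun θ => ?_
  have := h1 ((ρ : ℂ) * Complex.exp (θ * Complex.I))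
    (by rw [norm_circ hρ]; exact hlt.trans_le (min_le_left _ _))
  simp only [mem_ofPred_eq] at this
  rw [← this]; exact hh θ

lemma LocalSub.max {n : ℕ} {u v : Cn n → EReal} {a : Cn n} (hu : LocalSub u a)
    (hv : LocalSub v a) : LocalSub (fun w => max (u w) (v w)) a := by
  intro b
  obtain ⟨ρ₀, h0, h1⟩ := hu b
  obtain ⟨ρ₁, h2, h3⟩ := hv b
  refine ⟨min ρ₀ ρ₁, lt_min h0 h2, fun ρ hρ hlt g hg hh => ?_⟩
  exact max_le (h1 ρ hρ (hlt.trans_le (min_le_left _ _)) g hg fun θ => (le_max_left _ _).trans (hh θ))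
    (h3 ρ hρ (hlt.trans_le (min_le_right _ _)) g hg fun θ => (le_max_right _ _).trans (hh θ))

lemma mean_re {F : ℂ → ℂ} {ρ ρ₀ : ℝ} (hρ : 0 < ρ) (hlt : ρ < ρ₀)
    (hF : DifferentiableOn ℂ F (ball 0 ρ₀)) :
    Continuous (fun θ : ℝ => (F ((ρ : ℂ) * Complex.exp (θ * Complex.I))).re) ∧
    (1 / (2 * Real.pi)) * ∫ θ in (0:ℝ)..(2 * Real.pi),
      (F ((ρ : ℂ) * Complex.exp (θ * Complex.I))).re = (F 0).re := by
  have hc : Continuous (fun θ : ℝ => F ((ρ : ℂ) * Complex.exp (θ * Complex.I))) := by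
    refine hF.continuousOn.comp_continuous (by fun_prop) fun θ => ?_
    rw [mem_ball_zero_iff, norm_circ hρ]; exact hlt
  refine ⟨Complex.continuous_re.comp hc, ?_⟩
  have h1 : DiffContOnCl ℂ F (ball 0 |ρ|) := by
    rw [abs_of_pos hρ]
    apply DifferentiableOn.diffContOnCl
    rw [closure_ball _ hρ.ne']
    exact hF.mono (closedBall_subset_ball hlt)
  have h2 := h1.circleAverage
  rw [Real.circleAverage_def] at h2
  have h3 := congrArg Complex.re h2
  rw [← h3]
  simp only [circleMap, zero_add]
  rw [Complex.smul_re, smul_eq_mul, one_div]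
  congr 1
  exact Complex.reCLM.intervalIntegral_comp_comm (hc.intervalIntegrable _ _)

lemma mean_const (c : ℝ) :
    (1 / (2 * Real.pi)) * ∫ _θ in (0:ℝ)..(2 * Real.pi), c = c := by
  rw [intervalIntegral.integral_const]
  have := Real.pi_pos
  simp; field_simp

lemma local_contra {n : ℕ} {u : Cn n → EReal} {a b : Cn n} (hu : LocalSub u a)
    {y κ : ℝ} (hκ : 0 < κ) (hy : u a = (y : EReal)) {F : ℂ → ℂ} (hF0 : F 0 = 0) {ρ₀ : ℝ}
    (hρ₀ : 0 < ρ₀) (hF : DifferentiableOn ℂ F (ball 0 ρ₀))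
    (h : ∀ᶠ s in 𝓝 (0:ℂ), u (a + s • b) ≤ ((y + (F s).re - κ * ‖s‖ ^ 2 : ℝ) : EReal)) : False := by
  obtain ⟨ρ₁, h0, h1⟩ := hu b
  obtain ⟨ρ₂, h2, h3⟩ := Metric.mem_nhds_iff.1 h
  obtain ⟨ρ, hρ, hlt⟩ := exists_between (lt_min hρ₀ (lt_min h0 h2))
  rw [lt_min_iff, lt_min_iff] at hlt
  obtain ⟨hc, hm⟩ := mean_re hρ hlt.1 hF
  have := h1 ρ hρ hlt.2.1
    (fun θ => (F ((ρ : ℂ) * Complex.exp (θ * Complex.I))).re + (y - κ * ρ ^ 2))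
    (hc.add continuous_const) (fun θ => by
      have h4 : ((ρ : ℂ) * Complex.exp (θ * Complex.I)) ∈ ball (0:ℂ) ρ₂ := by
        rw [mem_ball_zero_iff, norm_circ hρ]; exact hlt.2.2
      have h5 := h3 h4
      simp only [mem_ofPred_eq, norm_circ hρ] at h5
      refine h5.trans (le_of_eq ?_)
      congr 1; ring)
  rw [hy, EReal.coe_le_coe_iff, intervalIntegral.integral_add (hc.intervalIntegrable _ _)
    (continuous_const.intervalIntegrable _ _), mul_add, hm, mean_const, hF0] at this
  have : 0 < κ * ρ ^ 2 := by positivity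
  simp at *
  linarith

lemma usc_add_coe {α : Type*} [TopologicalSpace α] {S : Set α} {u : α → EReal} {h : α → ℝ}
    (hu : UpperSemicontinuousOn u S) (hh : ContinuousOn h S) :
    UpperSemicontinuousOn (fun x => u x + (h x : EReal)) S := by
  refine hu.add' (ContinuousOn.upperSemicontinuousOn
    (continuous_coe_real_ereal.comp_continuousOn hh)) fun x hx => ?_
  exact EReal.continuousAt_add (by simp) (by simp)

/-- maximum of an usc function plus a continuous one on a compact set -/
lemma exists_max {α : Type*} [TopologicalSpace α] {S : Set α} (hS : IsCompact S)
    {u : α → EReal} {h : α → ℝ} (hu : UpperSemicontinuousOn u S) (hh : ContinuousOn h S)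
    (htop : ∀ x ∈ S, u x < ⊤) {x₀ : α} (hx₀ : x₀ ∈ S) {y₀ : ℝ} (hy₀ : u x₀ = (y₀ : EReal)) :
    ∃ x ∈ S, ∃ y : ℝ, u x = (y : EReal) ∧ y₀ + h x₀ ≤ y + h x ∧
      ∀ w ∈ S, u w ≤ ((y + h x - h w : ℝ) : EReal) := by
  obtain ⟨x, hx, hm⟩ := (usc_add_coe hu hh).exists_isMaxOn ⟨x₀, hx₀⟩ hS
  have h0 := hm hx₀
  simp only [mem_ofPred_eq, hy₀] at h0
  have hbot : u x ≠ ⊥ := by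
    intro hb
    rw [hb, EReal.bot_add, ← EReal.coe_add] at h0
    exact absurd h0 (by simp)
  lift u x to ℝ using ⟨(htop x hx).ne, hbot⟩ with y hy
  refine ⟨x, hx, y, hy.symm, by exact_mod_cast h0, fun w hw => ?_⟩
  have h1 := hm hw
  simp only [mem_ofPred_eq, ← hy] at h1
  by_cases hb : u w = ⊥
  · rw [hb]; exact bot_le
  lift u w to ℝ using ⟨(htop w hw).ne, hb⟩ with z hz
  rw [← EReal.coe_add, ← EReal.coe_add, EReal.coe_le_coe_iff] at h1
  rw [EReal.coe_le_coe_iff]; linarith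

lemma trig_approx (G : C(AddCircle (2 * Real.pi), ℂ)) {δ : ℝ} (hδ : 0 < δ) :
    ∃ q : ℂ → ℂ, Differentiable ℂ q ∧
      ∀ θ : ℝ, |(G (θ : AddCircle (2 * Real.pi))).re - (q (Complex.exp (θ * Complex.I))).re| < δ := by
  have : Fact (0 < 2 * Real.pi) := ⟨Real.two_pi_pos⟩
  have h1 : G ∈ (Submodule.span ℂ (range <| @fourier (2 * Real.pi))).topologicalClosure := by
    rw [span_fourier_closure_eq_top]; trivial
  have h1' : G ∈ closure ((Submodule.span ℂ (range <| @fourier (2 * Real.pi)) : Set C(AddCircle (2 * Real.pi), ℂ))) := by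
    rw [← Submodule.topologicalClosure_coe]; exact h1
  obtain ⟨P, hP, hd⟩ := Metric.mem_closure_iff.1 h1' δ hδ
  have key : ∃ q₁ q₂ : ℂ → ℂ, Differentiable ℂ q₁ ∧ Differentiable ℂ q₂ ∧
      ∀ θ : ℝ, (P (θ : AddCircle (2 * Real.pi))).re = (q₁ (Complex.exp (θ * Complex.I))).re ∧
        (P (θ : AddCircle (2 * Real.pi))).im = (q₂ (Complex.exp (θ * Complex.I))).re := by
    clear hd
    induction hP using Submodule.span_induction with
    | mem x hx =>
      obtain ⟨m, rfl⟩ := hx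
      have hf : ∀ θ : ℝ, fourier m (θ : AddCircle (2 * Real.pi)) = Complex.exp (m * (θ * Complex.I)) := by
        intro θ
        rw [fourier_coe_apply]
        congr 1
        have : (Real.pi : ℂ) ≠ 0 := by exact_mod_cast Real.pi_ne_zero
        push_cast
        field_simp
      obtain ⟨k, rfl | rfl⟩ := m.eq_nat_or_neg
      · refine ⟨fun t => t ^ k, fun t => -Complex.I * t ^ k, by fun_prop, by fun_prop, fun θ => ?_⟩
        rw [hf]
        simp only [← Complex.exp_nat_mul]
        simp
      · refine ⟨fun t => t ^ k, fun t => Complex.I * t ^ k, by fun_prop, by fun_prop, fun θ => ?_⟩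
        rw [hf]
        simp only [← Complex.exp_nat_mul]
        have : Complex.exp (((-(k:ℤ) : ℤ) : ℂ) * (θ * Complex.I)) =
            (starRingEnd ℂ) (Complex.exp (k * (θ * Complex.I))) := by
          rw [← Complex.exp_conj]; simp
        rw [this]
        simp
    | zero => exact ⟨0, 0, by fun_prop, by fun_prop, by simp⟩
    | add x y _ _ hx hy =>
      obtain ⟨a, b, ha, hb, h⟩ := hx
      obtain ⟨a', b', ha', hb', h'⟩ := hy
      refine ⟨fun t => a t + a' t, fun t => b t + b' t, by fun_prop, by fun_prop, fun θ => ?_⟩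
      simp [(h θ).1, (h θ).2, (h' θ).1, (h' θ).2]
    | smul c x _ hx =>
      obtain ⟨a, b, ha, hb, h⟩ := hx
      refine ⟨fun t => (c.re : ℂ) * a t - (c.im : ℂ) * b t,
        fun t => (c.re : ℂ) * b t + (c.im : ℂ) * a t, by fun_prop, by fun_prop, fun θ => ?_⟩
      simp [(h θ).1, (h θ).2]
  obtain ⟨q, _, hq, _, hh⟩ := key
  refine ⟨q, hq, fun θ => ?_⟩
  rw [← (hh θ).1, ← Complex.sub_re]
  calc _ ≤ ‖G θ - P θ‖ := Complex.abs_re_le_norm _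
    _ = dist (G θ) (P θ) := (dist_eq_norm _ _).symm
    _ ≤ dist G P := ContinuousMap.dist_apply_le_dist _
    _ < δ := hd

lemma exists_periodic {g : ℝ → ℝ} (hg : Continuous g) {δ : ℝ} (hδ : 0 < δ) :
    ∃ g' : ℝ → ℝ, Continuous g' ∧ g' 0 = g' (2 * Real.pi) ∧
      (∀ θ ∈ Icc 0 (2 * Real.pi), g θ ≤ g' θ) ∧
      (1 / (2 * Real.pi)) * ∫ θ in (0:ℝ)..(2 * Real.pi), g' θ ≤
        (1 / (2 * Real.pi)) * (∫ θ in (0:ℝ)..(2 * Real.pi), g θ) + δ := by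
  have hp := Real.two_pi_pos
  set p := 2 * Real.pi
  set k := g p - g 0 with hk
  obtain ⟨N, hN⟩ := exists_nat_gt ((|k| + 1) / δ)
  have hNpos : 0 < N := by
    have : (0:ℝ) < (|k| + 1) / δ := by positivity
    exact_mod_cast this.trans hN
  refine ⟨fun θ => g θ + (max k 0 * (1 - θ / p) ^ N + max (-k) 0 * (θ / p) ^ N), by fun_prop, ?_, ?_, ?_⟩
  · simp only [zero_div, sub_zero, one_pow, mul_one, div_self hp.ne', sub_self, zero_pow hNpos.ne',
      mul_zero, zero_add, add_zero]
    rcases le_total k 0 with h | h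
    · rw [max_eq_right h, max_eq_left (by linarith)]; linarith
    · rw [max_eq_left h, max_eq_right (by linarith)]; linarith
  · intro θ hθ
    have h1 : 0 ≤ θ / p := div_nonneg hθ.1 hp.le
    have h2 : 0 ≤ 1 - θ / p := by rw [sub_nonneg, div_le_one hp]; exact hθ.2
    have : 0 ≤ max k 0 * (1 - θ / p) ^ N + max (-k) 0 * (θ / p) ^ N := by positivity
    simp only; linarith
  · rw [intervalIntegral.integral_add (hg.intervalIntegrable _ _)
      (Continuous.intervalIntegrable (by fun_prop) _ _), intervalIntegral.integral_add
      (Continuous.intervalIntegrable (by fun_prop) _ _)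
      (Continuous.intervalIntegrable (by fun_prop) _ _), intervalIntegral.integral_const_mul,
      intervalIntegral.integral_const_mul,
      intervalIntegral.integral_comp_sub_div (fun x => x ^ N) hp.ne' 1,
      intervalIntegral.integral_comp_div (fun x => x ^ N) hp.ne']
    have h1 : max k 0 + max (-k) 0 = |k| := by
      rcases le_total k 0 with h | h
      · rw [max_eq_right h, max_eq_left (by linarith), abs_of_nonpos h]; ring
      · rw [max_eq_left h, max_eq_right (by linarith), abs_of_nonneg h]; ring
    have h2 : |k| / (N + 1) ≤ δ := by
      rw [div_lt_iff₀ hδ] at hN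
      rw [div_le_iff₀ (by positivity)]
      nlinarith
    simp only [zero_div, sub_zero, div_self hp.ne', sub_self, integral_pow, smul_eq_mul]
    rw [mul_add, add_le_add_iff_left]
    refine le_trans (le_of_eq ?_) h2
    rw [← h1]
    simp
    field_simp
    exact h1

lemma exists_harmonic {g : ℝ → ℝ} (hg : Continuous g) {δ : ℝ} (hδ : 0 < δ) :
    ∃ q : ℂ → ℂ, Differentiable ℂ q ∧
      (∀ θ ∈ Icc 0 (2 * Real.pi), g θ ≤ (q (Complex.exp (θ * Complex.I))).re) ∧
      (q 0).re ≤ (1 / (2 * Real.pi)) * (∫ θ in (0:ℝ)..(2 * Real.pi), g θ) + δ := by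
  have : Fact (0 < 2 * Real.pi) := ⟨Real.two_pi_pos⟩
  obtain ⟨g', hc, hper, hle, hint⟩ := exists_periodic hg (δ := δ / 3) (by positivity)
  have hcG : Continuous (AddCircle.liftIco (2 * Real.pi) 0 (fun θ => (g' θ : ℂ))) := by
    apply AddCircle.liftIco_zero_continuous
    · simp [hper]
    · exact (Complex.continuous_ofReal.comp hc).continuousOn
  obtain ⟨q, hq, hh⟩ := trig_approx ⟨_, hcG⟩ (δ := δ / 3) (by positivity)
  have hG : ∀ θ ∈ Icc 0 (2 * Real.pi), |g' θ - (q (Complex.exp (θ * Complex.I))).re| < δ / 3 := by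
    intro θ hθ
    rcases eq_or_lt_of_le hθ.2 with h | h
    · have := hh 0
      rw [ContinuousMap.coe_mk, AddCircle.liftIco_zero_coe_apply ⟨le_rfl, Real.two_pi_pos⟩] at this
      rw [h, ← hper]
      simpa using this
    · have := hh θ
      rw [ContinuousMap.coe_mk, AddCircle.liftIco_zero_coe_apply ⟨hθ.1, h⟩] at this
      simpa using this
  refine ⟨fun t => q t + (δ / 3 : ℝ), by fun_prop, fun θ hθ => ?_, ?_⟩
  · have h1 := (abs_lt.1 (hG θ hθ)).2
    have h2 := hle θ hθ
    rw [Complex.add_re, Complex.ofReal_re]; linarith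
  · obtain ⟨hcq, hm⟩ := mean_re (F := q) (ρ := 1) (ρ₀ := 2) one_pos one_lt_two hq.differentiableOn
    simp only [Complex.ofReal_one, one_mul] at hcq hm
    rw [Complex.add_re, Complex.ofReal_re, ← hm]
    have : (1 / (2 * Real.pi)) * ∫ θ in (0:ℝ)..(2 * Real.pi), (q (Complex.exp (θ * Complex.I))).re ≤
        (1 / (2 * Real.pi)) * ∫ θ in (0:ℝ)..(2 * Real.pi), (g' θ + δ / 3) := by
      gcongr
      refine intervalIntegral.integral_mono_on Real.two_pi_pos.le (hcq.intervalIntegrable _ _)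
        ((hc.add continuous_const).intervalIntegrable _ _) fun θ hθ => ?_
      have h1 := (abs_lt.1 (hG θ hθ)).1
      linarith
    rw [intervalIntegral.integral_add (hc.intervalIntegrable _ _)
      (continuous_const.intervalIntegrable _ _), mul_add, mean_const] at this
    linarith

/-- local sub-mean value property implies psh -/
lemma pshOn_of_local {n : ℕ} {u : Cn n → EReal} {D : Set (Cn n)}
    (husc : UpperSemicontinuousOn u D) (htop : ∀ x ∈ D, u x < ⊤)
    (hloc : ∀ a ∈ D, LocalSub u a) : PSHOn u D := by
  refine ⟨husc, fun a ha b r hr hin g hg hle => ?_⟩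
  by_contra hcon
  push Not at hcon
  set m := (1 / (2 * Real.pi)) * ∫ θ in (0:ℝ)..(2 * Real.pi), g θ with hm
  obtain ⟨y₀, hy₀⟩ : ∃ y₀ : ℝ, u a = (y₀ : EReal) := by
    lift u a to ℝ using ⟨(htop a ha).ne, (bot_le.trans_lt hcon).ne'⟩ with y
    exact ⟨y, rfl⟩
  rw [hy₀, EReal.coe_lt_coe_iff] at hcon
  set d := (y₀ - m) / 4 with hd
  have hdpos : 0 < d := by rw [hd]; linarith
  obtain ⟨q, hq, hq1, hq2⟩ := exists_harmonic hg hdpos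
  rw [← hm] at hq2
  set δ := d / r ^ 2 with hδ
  have hδpos : 0 < δ := by positivity
  have hcomp : UpperSemicontinuousOn (fun t : ℂ => u (a + t • b)) (closedBall 0 r) :=
    husc.comp (g := fun t : ℂ => a + t • b) (by fun_prop)
      (fun t ht => hin t (by simpa using mem_closedBall_zero_iff.1 ht))
  obtain ⟨t, ht, y, hy, hge, hmax⟩ := exists_max (isCompact_closedBall (0:ℂ) r) hcomp
    (h := fun t => - (q (t / r)).re + δ * ‖t‖ ^ 2)
    (by have := hq.continuous; fun_prop)
    (fun t ht => htop _ (hin t (mem_closedBall_zero_iff.1 ht))) (x₀ := 0) (by simp [hr.le]) (y₀ := y₀)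
    (by simpa using hy₀)
  have hrC : (r : ℂ) ≠ 0 := by exact_mod_cast hr.ne'
  have hδr : δ * r ^ 2 = d := by rw [hδ]; field_simp
  simp only [zero_div, norm_zero] at hge
  have htr : ‖t‖ ≤ r := by simpa using ht
  rcases eq_or_lt_of_le htr with heq | hlt
  · -- boundary
    obtain ⟨θ, hθ, hθ2⟩ : ∃ θ ∈ Icc 0 (2 * Real.pi), t = (r : ℂ) * Complex.exp (θ * Complex.I) := by
      have h1 := Complex.norm_mul_exp_arg_mul_I t
      rw [heq] at h1
      rcases le_total 0 (Complex.arg t) with h | h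
      · refine ⟨Complex.arg t, ⟨h, by linarith [Complex.arg_le_pi t, Real.pi_pos]⟩, h1.symm⟩
      · refine ⟨Complex.arg t + 2 * Real.pi,
          ⟨by linarith [Complex.neg_pi_lt_arg t, Real.pi_pos], by linarith⟩, ?_⟩
        rw [← h1]
        congr 1
        push_cast
        rw [add_mul, Complex.exp_add, Complex.exp_two_pi_mul_I, mul_one, h1]
    have h2 := hle θ
    rw [← hθ2, hy, EReal.coe_le_coe_iff] at h2
    have h3 := hq1 θ hθ
    have h4 : t / r = Complex.exp (θ * Complex.I) := by rw [hθ2]; field_simp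
    rw [h4, heq, hδr] at hge
    nlinarith
  · have hta : a + t • b ∈ D := hin t htr
    refine local_contra (b := b) (hloc _ hta) hδpos hy
      (F := fun s => q ((t + s) / r) - q (t / r) - 2 * δ * (starRingEnd ℂ) t * s) (by simp)
      one_pos (by apply Differentiable.differentiableOn; fun_prop) ?_
    have hev : ∀ᶠ s in 𝓝 (0:ℂ), ‖t + s‖ < r := by
      have : ContinuousAt (fun s : ℂ => ‖t + s‖) 0 := by fun_prop
      exact this.eventually_lt_const (by simpa using hlt)
    filter_upwards [hev] with s hs
    have := hmax (t + s) (by simpa using hs.le)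
    rw [add_smul, ← add_assoc] at this
    refine this.trans (le_of_eq ?_)
    congr 1
    have h5 : ‖t + s‖ ^ 2 = ‖t‖ ^ 2 + 2 * ((starRingEnd ℂ) t * s).re + ‖s‖ ^ 2 := by
      rw [← Complex.normSq_eq_norm_sq, ← Complex.normSq_eq_norm_sq, ← Complex.normSq_eq_norm_sq,
        Complex.normSq_apply, Complex.normSq_apply, Complex.normSq_apply]
      simp; ring
    rw [h5]
    have h6 : (2 * δ * (starRingEnd ℂ) t * s : ℂ).re = 2 * δ * ((starRingEnd ℂ) t * s).re := by
      have : (2 * δ * (starRingEnd ℂ) t * s : ℂ) = ((2 * δ : ℝ) : ℂ) * ((starRingEnd ℂ) t * s) := by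
        push_cast; ring
      rw [this, Complex.re_ofReal_mul]
    simp only [Complex.sub_re, h6]
    ring

lemma pole_bot {n : ℕ} {u : Cn n → EReal} {D : Set (Cn n)} (hD : IsOpen D) (hu : PSHOn u D)
    {z : Cn n} (hz : z ∈ D) {b : Cn n} (hb : ‖b‖ = 1) {C : ℝ}
    (hlog : ∀ᶠ x in 𝓝[D] z, u x ≤ ((Real.log ‖x - z‖ + C : ℝ) : EReal)) : u z = ⊥ := by
  rw [hD.nhdsWithin_eq hz] at hlog
  obtain ⟨η, hη, h1⟩ := Metric.mem_nhds_iff.1 hlog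
  obtain ⟨ρ₀, hρ₀, h2⟩ := hu.localSub hD hz b
  rw [EReal.eq_bot_iff_forall_lt]
  intro y
  have h3 : ∀ᶠ ρ in 𝓝[>] (0:ℝ), Real.log ρ < y - C :=
    Real.tendsto_log_nhdsGT_zero.eventually_lt_atBot _
  have h4 : ∀ᶠ ρ in 𝓝[>] (0:ℝ), ρ ∈ Ioo 0 (min ρ₀ η) := Ioo_mem_nhdsGT (lt_min hρ₀ hη)
  obtain ⟨ρ, h5, h6, h7⟩ := (h3.and h4).exists
  rw [lt_min_iff] at h7
  have := h2 ρ h6 h7.1 (fun _ => Real.log ρ + C) continuous_const (fun θ => by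
    have hn : ‖z + ((ρ : ℂ) * Complex.exp (θ * Complex.I)) • b - z‖ = ρ := by
      rw [add_sub_cancel_left, norm_smul, norm_circ h6, hb, mul_one]
    have := h1 (show z + ((ρ : ℂ) * Complex.exp (θ * Complex.I)) • b ∈ ball z η by
      rw [mem_ball_iff_norm, hn]; exact h7.2)
    simp only [mem_ofPred_eq, hn] at this
    exact this)
  rw [mean_const] at this
  refine this.trans_lt ?_
  rw [EReal.coe_lt_coe_iff]; linarith

set_option maxHeartbeats 1000000 in
/-- Schwarz lemma for functions in the Green family. -/
lemma green_le {n : ℕ} {u : Cn n → EReal} {D : Set (Cn n)} (hD : IsOpen D) (hu : PSHOn u D)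
    (hneg : ∀ x ∈ D, u x < 0) {z : Cn n} (hz : z ∈ D) (hbot : u z = ⊥) {C : ℝ}
    (hlog : ∀ᶠ x in 𝓝[D] z, u x ≤ ((Real.log ‖x - z‖ + C : ℝ) : EReal))
    {f : ℂ → Cn n} (hf : DifferentiableOn ℂ f (ball 0 1)) (hfD : MapsTo f (ball 0 1) D)
    (hf0 : f 0 = z) {t₁ : ℂ} (ht₁ : t₁ ≠ 0) (ht₁' : ‖t₁‖ < 1) :
    u (f t₁) ≤ ((Real.log ‖t₁‖ : ℝ) : EReal) := by
  by_contra hcon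
  push Not at hcon
  have hft₁ : f t₁ ∈ D := hfD (by simpa using ht₁')
  obtain ⟨y₁, hy₁⟩ : ∃ y₁ : ℝ, u (f t₁) = (y₁ : EReal) := by
    lift u (f t₁) to ℝ using ⟨((hneg _ hft₁).trans (by simp)).ne, (bot_le.trans_lt hcon).ne'⟩ with y
    exact ⟨y, rfl⟩
  rw [hy₁, EReal.coe_lt_coe_iff] at hcon
  have hnt₁ : 0 < ‖t₁‖ := norm_pos_iff.2 ht₁
  have hlt₁ : Real.log ‖t₁‖ < 0 := Real.log_neg hnt₁ ht₁'
  obtain ⟨d, hd⟩ : ∃ d, d = y₁ - Real.log ‖t₁‖ := ⟨_, rfl⟩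
  have hdpos : 0 < d := by linarith
  -- epsilon
  obtain ⟨ε, hε0, hε⟩ : ∃ ε, 0 < ε ∧ ε < min 1 (d / 4 / (-Real.log ‖t₁‖)) := by
    refine exists_between (lt_min one_pos ?_)
    apply div_pos <;> linarith
  rw [lt_min_iff, lt_div_iff₀ (by linarith)] at hε
  obtain ⟨hε1, hε2⟩ := hε
  -- r
  obtain ⟨r, hr1, hr2⟩ : ∃ r, max ‖t₁‖ (Real.exp (-(d/4))) < r ∧ r < 1 := by
    refine exists_between (max_lt ht₁' ?_)
    rw [Real.exp_lt_one_iff]; linarith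
  rw [max_lt_iff] at hr1
  obtain ⟨hr1, hr3⟩ := hr1
  have hr0 : 0 < r := hnt₁.trans hr1
  have hlr : -(d/4) < Real.log r := (Real.lt_log_iff_exp_lt hr0).2 hr3
  have hlr0 : Real.log r < 0 := Real.log_neg hr0 hr2
  obtain ⟨δ, hδ⟩ : ∃ δ, δ = d / 4 := ⟨_, rfl⟩
  have hδpos : 0 < δ := by linarith
  -- local bounds
  rw [hD.nhdsWithin_eq hz] at hlog
  obtain ⟨η, hη, hη1⟩ := Metric.mem_nhds_iff.1 hlog
  have hfd0 : DifferentiableAt ℂ f 0 := hf.differentiableAt (ball_mem_nhds _ one_pos)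
  obtain ⟨B, hB0, hB⟩ := hfd0.isBigO_sub.exists_pos
  rw [Asymptotics.isBigOWith_iff] at hB
  obtain ⟨η', hη', hB1⟩ := Metric.mem_nhds_iff.1 hB
  -- a
  obtain ⟨a, ⟨ha0, ha⟩, halog⟩ : ∃ a, a ∈ Ioo 0 (min (min ‖t₁‖ r) (min η' (η / (1 + B)))) ∧
      Real.log a < (d / 4 - (Real.log (1 + B) + C)) / ε := by
    have h3 : ∀ᶠ ρ in 𝓝[>] (0:ℝ), Real.log ρ < (d / 4 - (Real.log (1 + B) + C)) / ε :=
      Real.tendsto_log_nhdsGT_zero.eventually_lt_atBot _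
    have h4 : ∀ᶠ ρ in 𝓝[>] (0:ℝ), ρ ∈ Ioo 0 (min (min ‖t₁‖ r) (min η' (η / (1 + B)))) :=
      Ioo_mem_nhdsGT (by positivity)
    exact (h4.and h3).exists
  simp only [lt_min_iff] at ha
  obtain ⟨⟨ha1, ha2⟩, ha3, ha4⟩ := ha
  rw [lt_div_iff₀ (by positivity)] at ha4
  rw [lt_div_iff₀ hε0] at halog
  have hla : Real.log a < 0 := Real.log_neg ha0 (ha2.trans hr2)
  -- annulus and tube
  have hAsub : closedBall (0:ℂ) r ∩ {t | a ≤ ‖t‖} ⊆ ball 0 1 := fun t ht =>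
    closedBall_subset_ball hr2 ht.1
  have hAc : IsCompact (closedBall (0:ℂ) r ∩ {t | a ≤ ‖t‖}) :=
    (isCompact_closedBall _ _).inter_right (isClosed_le continuous_const continuous_norm)
  set A := closedBall (0:ℂ) r ∩ {t | a ≤ ‖t‖} with hA
  have hAmem : ∀ t, t ∈ A ↔ ‖t‖ ≤ r ∧ a ≤ ‖t‖ := by
    intro t; simp [hA]
  have hfA : ContinuousOn f A := hf.continuousOn.mono hAsub
  obtain ⟨κ₀, hκ₀, htube⟩ := (hAc.image_of_continuousOn hfA).exists_cthickening_subset_open hD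
    (by rintro _ ⟨t, ht, rfl⟩; exact hfD (hAsub ht))
  obtain ⟨κ, hκ0, hκ⟩ := exists_between (lt_min hκ₀ ha0)
  rw [lt_min_iff] at hκ
  have hSD : ∀ p ∈ A ×ˢ closedBall (0 : Cn n) κ, f p.1 + p.2 ∈ D := by
    rintro ⟨t, e⟩ ⟨ht, he⟩
    apply htube
    apply mem_cthickening_of_dist_le _ (f t) _ _ (mem_image_of_mem f ht)
    simp only [dist_self_add_left]
    exact (mem_closedBall_zero_iff.1 he).trans hκ.1.le
  obtain ⟨K, hK⟩ : ∃ K, K = (-Real.log a + δ) / κ ^ 2 := ⟨_, rfl⟩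
  have hKpos : 0 < K := by rw [hK]; apply div_pos; linarith; positivity
  have hKκ : K * κ ^ 2 = -Real.log a + δ := by rw [hK]; field_simp
  have hne : ∀ t ∈ A, ‖t‖ ≠ 0 := fun t ht => (ha0.trans_le ((hAmem t).1 ht).2).ne'
  obtain ⟨⟨t, e⟩, ⟨htA, heκ⟩, y, hy, hge, hmax⟩ := exists_max
    (S := A ×ˢ closedBall (0 : Cn n) κ) (u := fun p => u (f p.1 + p.2))
    (h := fun p => -(1 - ε) * Real.log ‖p.1‖ + δ * ‖p.1‖ ^ 2 - K * ‖p.2‖ ^ 2)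
    (hAc.prod (isCompact_closedBall _ _))
    (hu.1.comp (g := fun p : ℂ × Cn n => f p.1 + p.2)
      ((hfA.comp continuousOn_fst fun p hp => hp.1).add continuousOn_snd) hSD)
    (by
      refine ContinuousOn.sub (ContinuousOn.add (ContinuousOn.mul continuousOn_const ?_) ?_) ?_
      · exact ContinuousOn.log (by fun_prop) (fun p hp => hne p.1 hp.1)
      · fun_prop
      · fun_prop)
    (fun p hp => (hneg _ (hSD p hp)).trans (by simp)) (x₀ := (t₁, 0)) (y₀ := y₁)
    ⟨(hAmem _).2 ⟨hr1.le, ha1.le⟩, by simp [hκ0.le]⟩ (by simpa using hy₁)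
  simp only at hy hge hmax htA heκ
  have hwD : f t + e ∈ D := hSD (t, e) ⟨htA, heκ⟩
  have hy0 : y < 0 := by
    have := hneg _ hwD
    rw [hy] at this; exact_mod_cast this
  have heκ' : ‖e‖ ≤ κ := mem_closedBall_zero_iff.1 heκ
  obtain ⟨htr, hta⟩ := (hAmem t).1 htA
  have ht0 : 0 < ‖t‖ := ha0.trans_le hta
  have htne : t ≠ 0 := norm_pos_iff.1 ht0
  have hlta : Real.log a ≤ Real.log ‖t‖ := Real.log_le_log ha0 hta
  have hδt : δ * ‖t‖ ^ 2 ≤ δ := by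
    have : ‖t‖ ^ 2 ≤ 1 := pow_le_one₀ ht0.le (htr.trans hr2.le)
    nlinarith
  have hKe : 0 ≤ K * ‖e‖ ^ 2 := by positivity
  have hbig : 3 * d / 4 < y + (-(1 - ε) * Real.log ‖t‖ + δ * ‖t‖ ^ 2 - K * ‖e‖ ^ 2) := by
    refine lt_of_lt_of_le ?_ hge
    have : 0 < δ * ‖t₁‖ ^ 2 := by positivity
    simp only [norm_zero]
    nlinarith
  -- boundary cases
  have htr' : ‖t‖ < r := by
    refine lt_of_le_of_ne htr fun h => ?_
    rw [h] at hbig hδt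
    nlinarith
  have hta' : a < ‖t‖ := by
    refine lt_of_le_of_ne hta fun h => ?_
    rw [← h] at hbig hδt
    have hw1 : ‖f t - z‖ ≤ B * a := by
      have := hB1 (show t ∈ ball (0:ℂ) η' by rw [mem_ball_zero_iff, ← h]; exact ha3)
      simp only [mem_ofPred_eq, hf0, sub_zero, ← h] at this
      exact this
    have hw2 : ‖f t + e - z‖ ≤ (1 + B) * a := by
      have : f t + e - z = (f t - z) + e := by abel
      rw [this]
      refine (norm_add_le _ _).trans ?_
      linarith [hκ.2]
    have hw3 : f t + e ≠ z := by
      intro hh; rw [hh, hbot] at hy; exact absurd hy (by simp)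
    have hw4 : 0 < ‖f t + e - z‖ := norm_pos_iff.2 (sub_ne_zero.2 hw3)
    have hw5 := hη1 (show f t + e ∈ ball z η by
      rw [mem_ball_iff_norm]; refine hw2.trans_lt ?_; linarith)
    simp only [mem_ofPred_eq, hy, EReal.coe_le_coe_iff] at hw5
    have hw6 := Real.log_le_log hw4 hw2
    rw [Real.log_mul (by positivity) ha0.ne'] at hw6
    nlinarith
  have heκ'' : ‖e‖ < κ := by
    refine lt_of_le_of_ne heκ' fun h => ?_
    rw [h, hKκ] at hbig
    have : Real.log ‖t‖ ≤ 0 := Real.log_nonpos ht0.le (htr.trans hr2.le)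
    nlinarith
  -- interior
  have ht1 : ‖t‖ < 1 := htr'.trans hr2
  have hfdt : DifferentiableAt ℂ f t := hf.differentiableAt (isOpen_ball.mem_nhds (by simpa using ht1))
  have hderiv := hasDerivAt_iff_isLittleO_nhds_zero.1 hfdt.hasDerivAt
  obtain ⟨b, hb⟩ : ∃ b, b = deriv f t := ⟨_, rfl⟩
  rw [← hb] at hderiv
  obtain ⟨c, hc⟩ : ∃ c, c = Real.sqrt (δ / (2 * K)) := ⟨_, rfl⟩
  have hcpos : 0 < c := by rw [hc]; apply Real.sqrt_pos.2; positivity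
  have hc2 : K * c ^ 2 = δ / 2 := by
    rw [hc, Real.sq_sqrt (by positivity)]; field_simp
  have hR := (Asymptotics.isLittleO_iff.1 hderiv) hcpos
  refine local_contra (b := b) (hu.localSub hD hwD) (κ := δ / 2) (by positivity) hy
    (F := fun s => ((1 - ε : ℝ) : ℂ) * Complex.log (1 + s / t)
      - ((2 * K : ℝ) : ℂ) * (innerSL ℂ e) (f (t + s) - f t - s • b)
      - ((2 * δ : ℝ) : ℂ) * ((starRingEnd ℂ) t * s)) (by simp)
    (ρ₀ := min ‖t‖ (1 - ‖t‖)) (lt_min ht0 (by linarith)) ?_ ?_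
  · intro s hs
    rw [mem_ball_zero_iff, lt_min_iff] at hs
    have h1 : DifferentiableAt ℂ (fun s => Complex.log (1 + s / t)) s := by
      refine DifferentiableAt.clog (by fun_prop) ?_
      apply Complex.mem_slitPlane_of_norm_lt_one
      rw [norm_div, div_lt_one ht0]; exact hs.1
    have h2 : DifferentiableAt ℂ (fun s => f (t + s)) s := by
      have h3 : DifferentiableAt ℂ f (t + s) := by
        refine hf.differentiableAt (isOpen_ball.mem_nhds ?_)
        rw [mem_ball_zero_iff]
        refine (norm_add_le _ _).trans_lt ?_
        linarith [hs.2]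
      exact h3.comp s (by fun_prop)
    have h4 : DifferentiableAt ℂ (fun s => (innerSL ℂ e) (f (t + s) - f t - s • b)) s := by
      apply (innerSL ℂ e).differentiableAt.comp s
      exact (h2.sub (differentiableAt_const _)).sub (by fun_prop)
    apply DifferentiableAt.differentiableWithinAt
    fun_prop
  · have hev1 : ∀ᶠ s in 𝓝 (0:ℂ), ‖t + s‖ < r := by
      have : ContinuousAt (fun s : ℂ => ‖t + s‖) 0 := by fun_prop
      exact this.eventually_lt_const (by simpa using htr')
    have hev2 : ∀ᶠ s in 𝓝 (0:ℂ), a < ‖t + s‖ := by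
      have : ContinuousAt (fun s : ℂ => ‖t + s‖) 0 := by fun_prop
      exact this.eventually_const_lt (by simpa using hta')
    have hev3 : ∀ᶠ s in 𝓝 (0:ℂ), ‖e - (f (t + s) - f t - s • b)‖ < κ := by
      have hft : ContinuousAt (fun s => f (t + s)) 0 := by
        apply ContinuousAt.comp (g := f) (f := fun s => t + s)
        · simpa using hfdt.continuousAt
        · fun_prop
      have : ContinuousAt (fun s : ℂ => ‖e - (f (t + s) - f t - s • b)‖) 0 :=
        (continuousAt_const.sub ((hft.sub continuousAt_const).sub (by fun_prop))).norm
      exact this.eventually_lt_const (by simpa using heκ'')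
    filter_upwards [hev1, hev2, hev3, hR] with s h1 h2 h3 h4
    have h5 := hmax (t + s, e - (f (t + s) - f t - s • b))
      ⟨(hAmem _).2 ⟨h1.le, h2.le⟩, by rw [mem_closedBall_zero_iff]; exact h3.le⟩
    simp only at h5
    have h6 : f (t + s) + (e - (f (t + s) - f t - s • b)) = f t + e + s • b := by abel
    rw [h6] at h5
    refine h5.trans ?_
    rw [EReal.coe_le_coe_iff]
    obtain ⟨R, hRdef⟩ : ∃ R, R = f (t + s) - f t - s • b := ⟨_, rfl⟩
    rw [← hRdef] at h4 ⊢
    have h7 : ‖e - R‖ ^ 2 = ‖e‖ ^ 2 - 2 * ((innerSL ℂ e) R).re + ‖R‖ ^ 2 := by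
      rw [norm_sub_sq (𝕜 := ℂ)]; rfl
    have h8 : ‖t + s‖ ^ 2 = ‖t‖ ^ 2 + 2 * ((starRingEnd ℂ) t * s).re + ‖s‖ ^ 2 := by
      rw [← Complex.normSq_eq_norm_sq, ← Complex.normSq_eq_norm_sq, ← Complex.normSq_eq_norm_sq,
        Complex.normSq_apply, Complex.normSq_apply, Complex.normSq_apply]
      simp; ring
    have h9 : (Complex.log (1 + s / t)).re = Real.log ‖t + s‖ - Real.log ‖t‖ := by
      rw [Complex.log_re, ← Real.log_div (ha0.trans h2).ne' ht0.ne', ← norm_div]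
      congr 2; field_simp
    have h10 : K * ‖R‖ ^ 2 ≤ δ / 2 * ‖s‖ ^ 2 := by
      have : ‖R‖ ^ 2 ≤ (c * ‖s‖) ^ 2 := by gcongr
      calc K * ‖R‖ ^ 2 ≤ K * (c * ‖s‖) ^ 2 := by gcongr
        _ = (K * c ^ 2) * ‖s‖ ^ 2 := by ring
        _ = _ := by rw [hc2]
    simp only [Complex.sub_re, Complex.re_ofReal_mul, h9]
    rw [h7, h8]
    nlinarith

lemma coe_mul_le_iff {c : ℝ} (hc : 0 < c) (x : EReal) (y : ℝ) :
    (c : EReal) * x ≤ (y : EReal) ↔ x ≤ ((y / c : ℝ) : EReal) := by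
  induction x with
  | bot => simp [EReal.coe_mul_bot_of_pos hc]
  | coe x => rw [← EReal.coe_mul, EReal.coe_le_coe_iff, EReal.coe_le_coe_iff, le_div_iff₀' hc]
  | top => simp [EReal.coe_mul_top_of_pos hc, -EReal.coe_div]

lemma coe_mul_lt_iff {c : ℝ} (hc : 0 < c) (x : EReal) (y : ℝ) :
    (c : EReal) * x < (y : EReal) ↔ x < ((y / c : ℝ) : EReal) := by
  induction x with
  | bot => simp [EReal.coe_mul_bot_of_pos hc, -EReal.coe_div, EReal.bot_lt_coe]
  | coe x => rw [← EReal.coe_mul, EReal.coe_lt_coe_iff, EReal.coe_lt_coe_iff, lt_div_iff₀' hc]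
  | top => simp [EReal.coe_mul_top_of_pos hc, -EReal.coe_div]

lemma PSHOn.const_mul {n : ℕ} {u : Cn n → EReal} {D : Set (Cn n)} (hu : PSHOn u D)
    {c : ℝ} (hc : 0 < c) : PSHOn (fun w => (c : EReal) * u w) D := by
  have hc' : (c : EReal) ≠ 0 := by exact_mod_cast hc.ne'
  refine ⟨?_, ?_⟩
  · refine Continuous.comp_upperSemicontinuousOn (g := fun x : EReal => (c : EReal) * x)
      ?_ hu.1 ?_
    · rw [continuous_iff_continuousAt]
      intro x
      exact (EReal.continuousAt_mul (p := ((c : EReal), x)) (Or.inl hc') (Or.inl hc')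
        (by simp) (by simp)).comp (f := fun x : EReal => ((c : EReal), x)) (by fun_prop)
    · intro x y hxy
      exact mul_le_mul_of_nonneg_left hxy (by exact_mod_cast hc.le)
  · intro a ha b r hr hin g hg hle
    have := hu.2 a ha b r hr hin (fun θ => g θ / c) (by fun_prop)
      (fun θ => (coe_mul_le_iff hc _ _).1 (hle θ))
    rw [coe_mul_le_iff hc]
    refine this.trans (le_of_eq ?_)
    rw [intervalIntegral.integral_div, mul_div_assoc]

/-- `log‖w-z‖ - L`. -/
def logPole {n : ℕ} (z : Cn n) (L : ℝ) (w : Cn n) : EReal :=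
  if w = z then ⊥ else ((Real.log ‖w - z‖ - L : ℝ) : EReal)

lemma logPole_localSub {n : ℕ} (z : Cn n) (L : ℝ) (a : Cn n) : LocalSub (logPole z L) a := by
  intro b
  by_cases haz : a = z
  · exact ⟨1, one_pos, fun _ _ _ _ _ _ => by rw [logPole, if_pos haz]; exact bot_le⟩
  obtain ⟨A, hA⟩ : ∃ A, A = a - z := ⟨_, rfl⟩
  have hA0 : 0 < ‖A‖ := by rw [hA]; exact norm_pos_iff.2 (sub_ne_zero.2 haz)
  obtain ⟨c, hc⟩ : ∃ c : ℂ, c = inner ℂ A b / ((‖A‖ ^ 2 : ℝ) : ℂ) := ⟨_, rfl⟩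
  have hA2 : ((‖A‖ ^ 2 : ℝ) : ℂ) ≠ 0 := by exact_mod_cast (by positivity : ‖A‖ ^ 2 ≠ 0)
  have hsmall : ∀ s : ℂ, ‖s‖ < 1 / (‖c‖ + 1) → ‖s * c‖ < 1 := by
    intro s hs
    rw [lt_div_iff₀ (by positivity)] at hs
    rw [norm_mul]
    nlinarith [norm_nonneg s, norm_nonneg c]
  have hF : DifferentiableOn ℂ (fun s => Complex.log (1 + s * c)) (ball 0 (1 / (‖c‖ + 1))) := by
    intro s hs
    apply DifferentiableAt.differentiableWithinAt
    exact DifferentiableAt.clog (by fun_prop)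
      (Complex.mem_slitPlane_of_norm_lt_one (hsmall s (by simpa using hs)))
  refine ⟨1 / (‖c‖ + 1), by positivity, fun ρ hρ hlt g hg hle => ?_⟩
  obtain ⟨hcont, hm⟩ := mean_re hρ hlt hF
  rw [logPole, if_neg haz, EReal.coe_le_coe_iff, ← hA]
  have key : ∀ θ : ℝ, (Complex.log (1 + ((ρ : ℂ) * Complex.exp (θ * Complex.I)) * c)).re
      + (Real.log ‖A‖ - L) ≤ g θ := by
    intro θ
    have h1 := hle θ
    have h2 : ‖((ρ : ℂ) * Complex.exp (θ * Complex.I))‖ < 1 / (‖c‖ + 1) := by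
      rw [norm_circ hρ]; exact hlt
    generalize ((ρ : ℂ) * Complex.exp (θ * Complex.I)) = s at h1 h2 ⊢
    have h3 : ‖s * c‖ < 1 := hsmall s h2
    have h4 : 0 < ‖1 + s * c‖ := by
      refine norm_pos_iff.2 fun h => ?_
      have : s * c = -1 := by linear_combination h
      rw [this] at h3; simp at h3
    have h5 : ‖1 + s * c‖ * ‖A‖ ≤ ‖A + s • b‖ := by
      have h6 : inner ℂ A (A + s • b) = ((‖A‖ ^ 2 : ℝ) : ℂ) * (1 + s * c) := by
        rw [inner_add_right, inner_smul_right, inner_self_eq_norm_sq_to_K, hc]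
        field_simp
        simp
      have h7 := norm_inner_le_norm (𝕜 := ℂ) A (A + s • b)
      rw [h6, norm_mul, Complex.norm_real, Real.norm_of_nonneg (by positivity)] at h7
      have : ‖A‖ * (‖1 + s * c‖ * ‖A‖) ≤ ‖A‖ * ‖A + s • b‖ := by nlinarith
      exact le_of_mul_le_mul_left this hA0
    have h8 : a + s • b - z = A + s • b := by rw [hA]; abel
    have h9 : 0 < ‖A + s • b‖ := lt_of_lt_of_le (by positivity) h5
    have h10 : a + s • b ≠ z := by
      intro h; rw [← h8, h, sub_self, norm_zero] at h9; exact lt_irrefl _ h9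
    rw [logPole, if_neg h10, EReal.coe_le_coe_iff, h8] at h1
    have h11 := Real.log_le_log (by positivity) h5
    rw [Real.log_mul h4.ne' hA0.ne'] at h11
    rw [Complex.log_re]
    linarith
  have hint : (1 / (2 * Real.pi)) * ∫ θ in (0:ℝ)..(2 * Real.pi),
      ((Complex.log (1 + ((ρ : ℂ) * Complex.exp (θ * Complex.I)) * c)).re + (Real.log ‖A‖ - L)) ≤
      (1 / (2 * Real.pi)) * ∫ θ in (0:ℝ)..(2 * Real.pi), g θ := by
    gcongr
    exact intervalIntegral.integral_mono_on Real.two_pi_pos.le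
      ((hcont.add continuous_const).intervalIntegrable _ _) (hg.intervalIntegrable _ _)
      fun θ _ => key θ
  rw [intervalIntegral.integral_add (hcont.intervalIntegrable _ _)
    (continuous_const.intervalIntegrable _ _), mul_add, hm, mean_const] at hint
  simpa using hint

lemma logPole_usc {n : ℕ} (z : Cn n) (L : ℝ) : UpperSemicontinuous (logPole z L) := by
  intro a y hy
  by_cases haz : a = z
  · subst haz
    have hy' : ⊥ < y := bot_le.trans_lt hy
    obtain ⟨m, -, hm⟩ := EReal.lt_iff_exists_real_btwn.1 hy'
    have h3 : ∀ᶠ ρ in 𝓝[>] (0:ℝ), Real.log ρ < m + L :=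
      Real.tendsto_log_nhdsGT_zero.eventually_lt_atBot _
    obtain ⟨η, hη, h4⟩ := (mem_nhdsGT_iff_exists_Ioo_subset).1 h3
    filter_upwards [ball_mem_nhds a hη] with w hw
    by_cases hwa : w = a
    · rw [logPole, if_pos hwa]; exact hy'
    · rw [logPole, if_neg hwa]
      refine lt_trans ?_ hm
      rw [EReal.coe_lt_coe_iff]
      have := h4 ⟨norm_pos_iff.2 (sub_ne_zero.2 hwa), mem_ball_iff_norm.1 hw⟩
      simp only [mem_ofPred_eq] at this
      linarith
  · have hc : ContinuousAt (fun w => ((Real.log ‖w - z‖ - L : ℝ) : EReal)) a := by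
      apply continuous_coe_real_ereal.continuousAt.comp
      refine ContinuousAt.sub (ContinuousAt.log (by fun_prop) ?_) continuousAt_const
      exact norm_ne_zero_iff.2 (sub_ne_zero.2 haz)
    rw [logPole, if_neg haz] at hy
    filter_upwards [hc.eventually_lt_const hy, isOpen_ne.mem_nhds haz] with w h1 h2
    rw [logPole, if_neg h2]; exact h1

lemma logPole_lt {n : ℕ} {z : Cn n} {L m R : ℝ} {w : Cn n} (hR : 0 < R) (hw : ‖w - z‖ ≤ R)
    (h : Real.log R - L < m) : logPole z L w < (m : EReal) := by
  by_cases hwz : w = z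
  · rw [logPole, if_pos hwz]; exact EReal.bot_lt_coe _
  · rw [logPole, if_neg hwz, EReal.coe_lt_coe_iff]
    have := Real.log_le_log (norm_pos_iff.2 (sub_ne_zero.2 hwz)) hw
    linarith

lemma peak_construct {n : ℕ} {D : Set (Cn n)} (hD : IsOpen D) {φ : Cn n → EReal}
    (hφ : IsPshPeakFnAtInfty D φ) {r : ℝ} (hr : 0 < r) :
    ∃ L : ℝ, ∀ z ∈ D, ‖z‖ < r → ∃ U : Cn n → EReal, PSHOn U D ∧ (∀ x ∈ D, U x < 0) ∧
      ∀ w, ‖w - z‖ ≤ 1 → U w = logPole z L w := by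
  obtain ⟨hpsh, htend, hpk⟩ := hφ
  have hcob : ∀ ρ : ℝ, (closedBall (0 : Cn n) ρ)ᶜ ∈ Bornology.cobounded (Cn n) := fun ρ =>
    Bornology.isBounded_def.1 isBounded_closedBall
  obtain ⟨c₀, hc₀, hle⟩ := hpk _ (hcob (r + 2))
  have hle' : ∀ w ∈ D, ‖w‖ ≤ r + 2 → φ w ≤ (c₀ : EReal) := fun w hw h =>
    hle w ⟨hw, by simpa using h⟩
  have hneg : ∀ w ∈ D, φ w < 0 := by
    intro w hw
    obtain ⟨c, hc, h⟩ := hpk _ (hcob ‖w‖)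
    exact (h w ⟨hw, by simp⟩).trans_lt (by exact_mod_cast hc)
  have hev : ∀ᶠ w in Bornology.cobounded (Cn n) ⊓ 𝓟 D, ((c₀ / 2 : ℝ) : EReal) < φ w :=
    htend.eventually_const_lt (by
      have : c₀ / 2 < 0 := by linarith
      exact_mod_cast this)
  rw [eventually_inf_principal] at hev
  obtain ⟨R₁, hR₁⟩ : ∃ R₁ : ℝ, ∀ w ∈ D, R₁ < ‖w‖ → ((c₀ / 2 : ℝ) : EReal) < φ w := by
    obtain ⟨R₁, -, h⟩ := (Metric.hasBasis_cobounded_compl_closedBall (0 : Cn n)).eventually_iff.1 hev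
    exact ⟨R₁, fun w hw h' => h (by simpa using h') hw⟩
  obtain ⟨R, hR⟩ : ∃ R, R = max R₁ 0 + r + 2 := ⟨_, rfl⟩
  have hR2 : 2 ≤ R := by rw [hR]; linarith [le_max_right R₁ 0]
  have hlogR : 0 < Real.log (R + 1) := Real.log_pos (by linarith)
  obtain ⟨Λ, hΛ⟩ : ∃ Λ, Λ = 2 * Real.log (R + 1) / (-c₀) + 1 := ⟨_, rfl⟩
  have hΛ0 : 0 < Λ := by
    rw [hΛ]
    have : 0 < 2 * Real.log (R + 1) / (-c₀) := div_pos (by linarith) (by linarith)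
    linarith
  have hΛ1 : Real.log (R + 1) - Λ * (-c₀) < Λ * (c₀ / 2) := by
    have : Λ * (-c₀) = 2 * Real.log (R + 1) + (-c₀) := by
      rw [hΛ, add_mul, div_mul_cancel₀ _ (by linarith)]; ring
    nlinarith
  obtain ⟨L, hL⟩ : ∃ L, L = Λ * (-c₀) := ⟨_, rfl⟩
  rw [← hL] at hΛ1
  have hL0 : 0 < L := by rw [hL]; apply mul_pos hΛ0; linarith
  refine ⟨L, fun z hz hzr => ?_⟩
  let P := logPole z L
  let Φ : Cn n → EReal := fun w => (Λ : EReal) * φ w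
  have hΦpsh : PSHOn Φ D := hpsh.const_mul hΛ0
  have hΦneg : ∀ w ∈ D, Φ w < 0 := by
    intro w hw
    have := (coe_mul_lt_iff hΛ0 (φ w) 0).2 (by simpa using hneg w hw)
    simpa using this
  let U : Cn n → EReal := fun w => if ‖w - z‖ ≤ 1 then P w else
    if ‖w - z‖ < R + 1 then max (P w) (Φ w) else Φ w
  have hi : ∀ w ∈ D, ‖w - z‖ < 2 → U w = P w := by
    intro w hw h
    by_cases h1 : ‖w - z‖ ≤ 1
    · simp only [U, if_pos h1]
    · simp only [U, if_neg h1, if_pos (show ‖w - z‖ < R + 1 by linarith)]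
      apply max_eq_left
      push Not at h1
      have hwz : w ≠ z := by rintro rfl; simp at h1; linarith
      have h2 : φ w ≤ (c₀ : EReal) := by
        apply hle' w hw
        have := norm_sub_norm_le w z
        linarith
      have h3 : Φ w ≤ ((Λ * c₀ : ℝ) : EReal) := by
        rw [coe_mul_le_iff hΛ0, mul_div_cancel_left₀ _ hΛ0.ne']; exact h2
      refine h3.trans ?_
      simp only [P, logPole, if_neg hwz]
      rw [EReal.coe_le_coe_iff]
      have := Real.log_nonneg h1.le
      rw [hL]; linarith
  have hii : ∀ w, 1 < ‖w - z‖ → ‖w - z‖ < R + 1 → U w = max (P w) (Φ w) := by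
    intro w h1 h2
    simp only [U, if_neg (not_le.2 h1), if_pos h2]
  have hiii : ∀ w ∈ D, R < ‖w - z‖ → U w = Φ w := by
    intro w hw h1
    simp only [U, if_neg (show ¬ ‖w - z‖ ≤ 1 by linarith)]
    split_ifs with h2
    · apply max_eq_right
      have h3 := logPole_lt (by linarith) h2.le hΛ1
      refine h3.le.trans ?_
      by_contra hcon
      push Not at hcon
      rw [coe_mul_lt_iff hΛ0, mul_div_cancel_left₀ _ hΛ0.ne'] at hcon
      refine absurd (hR₁ w hw ?_) (not_lt.2 hcon.le)
      have := norm_sub_le w z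
      have := le_max_left R₁ 0
      linarith
    · rfl
  have cases3 : ∀ a ∈ D, (∀ᶠ w in 𝓝 a, U w = P w) ∨ (∀ᶠ w in 𝓝 a, U w = max (P w) (Φ w)) ∨
      (∀ᶠ w in 𝓝 a, U w = Φ w) := by
    intro a ha
    have hcn : ContinuousAt (fun w => ‖w - z‖) a := by fun_prop
    have hDa := hD.mem_nhds ha
    by_cases h1 : ‖a - z‖ < 2
    · left
      filter_upwards [hDa, hcn.eventually_lt_const h1] with w hw hw2 using hi w hw hw2
    · right
      by_cases h2 : R < ‖a - z‖
      · right
        filter_upwards [hDa, hcn.eventually_const_lt h2] with w hw hw2 using hiii w hw hw2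
      · left
        filter_upwards [hcn.eventually_const_lt (show 1 < ‖a - z‖ by linarith),
          hcn.eventually_lt_const (show ‖a - z‖ < R + 1 by linarith)] with w hw hw2 using hii w hw hw2
  have hUneg : ∀ x ∈ D, U x < 0 := by
    intro x hx
    by_cases h1 : ‖x - z‖ < 2
    · rw [hi x hx h1]
      refine (logPole_lt (R := R + 1) (by linarith) (by linarith) hΛ1).trans ?_
      have : Λ * (c₀ / 2) < 0 := by nlinarith
      exact_mod_cast this
    · by_cases h2 : R < ‖x - z‖
      · rw [hiii x hx h2]; exact hΦneg x hx
      · rw [hii x (by linarith) (by linarith)]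
        refine max_lt ((logPole_lt (R := R + 1) (by linarith) (by linarith) hΛ1).trans ?_) (hΦneg x hx)
        have : Λ * (c₀ / 2) < 0 := by nlinarith
        exact_mod_cast this
  refine ⟨U, pshOn_of_local ?_ (fun x hx => (hUneg x hx).trans (by simp)) ?_, hUneg, ?_⟩
  · intro a ha y hy
    have hPa := (logPole_usc z L) a
    have hΦa := hΦpsh.1 a ha
    rcases cases3 a ha with h | h | h
    · rw [h.self_of_nhds] at hy
      filter_upwards [h.filter_mono nhdsWithin_le_nhds, (hPa y hy).filter_mono nhdsWithin_le_nhds]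
        with w h1 h2
      rw [h1]; exact h2
    · rw [h.self_of_nhds, max_lt_iff] at hy
      filter_upwards [h.filter_mono nhdsWithin_le_nhds,
        (hPa y hy.1).filter_mono nhdsWithin_le_nhds, hΦa y hy.2]
        with w h1 h2 h3
      rw [h1]; exact max_lt h2 h3
    · rw [h.self_of_nhds] at hy
      filter_upwards [h.filter_mono nhdsWithin_le_nhds, hΦa y hy] with w h1 h2
      rw [h1]; exact h2
  · intro a ha
    rcases cases3 a ha with h | h | h
    · exact (logPole_localSub z L a).congr h
    · exact ((logPole_localSub z L a).max (hΦpsh.localSub hD ha)).congr h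
    · exact (hΦpsh.localSub hD ha).congr h
  · intro w hw
    simp only [U, if_pos hw, P]


lemma exists_kappa {n : ℕ} {D : Set (Cn n)} (hD : IsOpen D) {z : Cn n} (hz : z ∈ D) (X : Cn n) :
    ∃ κ : ℝ, 0 < κ ∧ ∀ t : ℂ, ‖t‖ < 1 → z + t • ((κ : ℂ) • X) ∈ D := by
  obtain ⟨R, hR, hRD⟩ := Metric.isOpen_iff.1 hD z hz
  refine ⟨R / (‖X‖ + 1), by positivity, fun t ht => hRD ?_⟩
  rw [mem_ball, dist_eq_norm, add_sub_cancel_left, norm_smul, norm_smul, Complex.norm_real,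
    Real.norm_of_nonneg (by positivity)]
  have h1 : R / (‖X‖ + 1) * ‖X‖ < R := by
    rw [div_mul_eq_mul_div, div_lt_iff₀ (by positivity)]
    nlinarith [norm_nonneg X]
  have h2 : 0 ≤ R / (‖X‖ + 1) * ‖X‖ := by positivity
  nlinarith [norm_nonneg t]

lemma disc_diff {n : ℕ} (z Y : Cn n) : Differentiable ℂ (fun t : ℂ => z + t • Y) :=
  (differentiable_const z).add (differentiable_id.smul_const Y)

lemma family_le {n : ℕ} {D : Set (Cn n)} (hD : IsOpen D) {u : Cn n → EReal} (hu : PSHOn u D)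
    (hneg : ∀ x ∈ D, u x < 0) {z X b : Cn n} (hz : z ∈ D) (hb : ‖b‖ = 1) {C : ℝ}
    (hlog : ∀ᶠ x in 𝓝[D] z, u x ≤ ((Real.log ‖x - z‖ + C : ℝ) : EReal))
    {κ : ℝ} (hκ : 0 < κ) (hκD : ∀ t : ℂ, ‖t‖ < 1 → z + t • ((κ : ℂ) • X) ∈ D)
    {l : ℂ} (hl : l ≠ 0) (hl' : ‖l‖ < κ) :
    u (z + l • X) ≤ ((Real.log (‖l‖ / κ) : ℝ) : EReal) := by
  have hbot := pole_bot hD hu hz hb hlog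
  have hκ' : (κ : ℂ) ≠ 0 := by exact_mod_cast hκ.ne'
  have hn : ‖l / (κ : ℂ)‖ = ‖l‖ / κ := by
    rw [norm_div, Complex.norm_real, Real.norm_of_nonneg hκ.le]
  have := green_le hD hu hneg hz hbot hlog (f := fun t => z + t • ((κ : ℂ) • X))
    (disc_diff z _).differentiableOn
    (fun t ht => hκD t (by simpa using ht)) (by simp) (t₁ := l / κ) (div_ne_zero hl hκ')
    (by rw [hn, div_lt_one hκ]; exact hl')
  rw [hn] at this
  have he : (l / (κ : ℂ)) • ((κ : ℂ) • X) = l • X := by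
    rw [smul_smul, div_mul_cancel₀ _ hκ']
  simp only [he] at this
  exact this

lemma quad_bound {n : ℕ} {v : Cn n → ℝ} {z : Cn n} (hv : ContDiffAt ℝ 2 v z) (hz : v z = 0)
    (hd : fderiv ℝ v z = 0) :
    ∃ K : ℝ, 0 < K ∧ ∀ᶠ w in 𝓝 z, v w ≤ K * ‖w - z‖ ^ 2 := by
  have h1 : ContDiffAt ℝ 1 (fderiv ℝ v) z := hv.fderiv_right (by norm_num)
  have h2 := (h1.differentiableAt (by norm_num)).hasFDerivAt.isBigO_sub
  obtain ⟨K, hK, hK'⟩ := h2.exists_pos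
  have h3 : ∀ᶠ w in 𝓝 z, DifferentiableAt ℝ v w :=
    (hv.eventually (by simp)).mono fun w hw => hw.differentiableAt (by norm_num)
  obtain ⟨R, hR, hRb⟩ := Metric.eventually_nhds_iff_ball.1 (hK'.bound.and h3)
  refine ⟨K, hK, Metric.eventually_nhds_iff_ball.2 ⟨R, hR, fun w hw => ?_⟩⟩
  have hsub : closedBall z ‖w - z‖ ⊆ ball z R := by
    apply closedBall_subset_ball
    rwa [mem_ball, dist_eq_norm] at hw
  have := Convex.norm_image_sub_le_of_norm_fderiv_le (𝕜 := ℝ) (f := v) (C := K * ‖w - z‖)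
    (s := closedBall z ‖w - z‖) (x := z) (y := w)
    (fun x hx => (hRb x (hsub hx)).2)
    (fun x hx => by
      have h := (hRb x (hsub hx)).1
      rw [hd, sub_zero] at h
      refine h.trans ?_
      rw [mem_closedBall, dist_eq_norm] at hx
      gcongr)
    (convex_closedBall _ _) (by simp) (by simp [dist_eq_norm])
  rw [hz, sub_zero] at this
  calc v w ≤ ‖v w‖ := le_abs_self _
    _ ≤ _ := this
    _ = _ := by ring

lemma line_deriv {n : ℕ} {v : Cn n → ℝ} {z : Cn n} (hv : ContDiffAt ℝ 2 v z) (Y : Cn n) :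
    deriv (fun t : ℝ => v (z + t • Y)) =ᶠ[𝓝 0] fun t => fderiv ℝ v (z + t • Y) Y := by
  have h3 : ∀ᶠ w in 𝓝 z, DifferentiableAt ℝ v w :=
    (hv.eventually (by simp)).mono fun w hw => hw.differentiableAt (by norm_num)
  have hc : Tendsto (fun t : ℝ => z + t • Y) (𝓝 0) (𝓝 z) := by
    have : Continuous (fun t : ℝ => z + t • Y) := by fun_prop
    simpa using this.tendsto 0
  filter_upwards [hc.eventually h3] with t ht
  have hl : HasDerivAt (fun t : ℝ => z + t • Y) Y t := by
    simpa using ((hasDerivAt_id t).smul_const Y).const_add z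
  exact (ht.hasFDerivAt.comp_hasDerivAt t hl).deriv

lemma line_deriv2 {n : ℕ} {v : Cn n → ℝ} {z : Cn n} (hv : ContDiffAt ℝ 2 v z) (Y : Cn n) :
    deriv (deriv (fun t : ℝ => v (z + t • Y))) 0 = iteratedFDeriv ℝ 2 v z ![Y, Y] ∧
    DifferentiableAt ℝ (deriv (fun t : ℝ => v (z + t • Y))) 0 := by
  have h1 : ContDiffAt ℝ 1 (fderiv ℝ v) z := hv.fderiv_right (by norm_num)
  have h2 := (h1.differentiableAt (by norm_num)).hasFDerivAt
  have hl : HasDerivAt (fun t : ℝ => z + t • Y) Y 0 := by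
    simpa using ((hasDerivAt_id (0:ℝ)).smul_const Y).const_add z
  have h2' : HasFDerivAt (fderiv ℝ v) (fderiv ℝ (fderiv ℝ v) z) (z + (0:ℝ) • Y) := by
    simpa using h2
  have h4 : HasDerivAt (fun t : ℝ => fderiv ℝ v (z + t • Y)) (fderiv ℝ (fderiv ℝ v) z Y) 0 :=
    h2'.comp_hasDerivAt (0:ℝ) hl
  have h5 : HasDerivAt (fun t : ℝ => fderiv ℝ v (z + t • Y) Y) (fderiv ℝ (fderiv ℝ v) z Y Y) 0 := by
    simpa using h4.clm_apply (hasDerivAt_const (0:ℝ) Y)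
  have h6 := h5.congr_of_eventuallyEq (line_deriv hv Y)
  refine ⟨?_, h6.differentiableAt⟩
  rw [h6.deriv, iteratedFDeriv_two_apply]
  simp

lemma second_le {n : ℕ} {v : Cn n → ℝ} {z : Cn n} (hv : ContDiffAt ℝ 2 v z) (hz : v z = 0)
    (hd : fderiv ℝ v z = 0) (Y : Cn n) {C : ℝ}
    (hC : ∀ᶠ t : ℝ in 𝓝[≠] 0, v (z + t • Y) ≤ C * t ^ 2) :
    iteratedFDeriv ℝ 2 v z ![Y, Y] ≤ 2 * C := by
  by_contra hcon
  push Not at hcon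
  set S := iteratedFDeriv ℝ 2 v z ![Y, Y] with hS
  obtain ⟨C', hC1, hC2⟩ := exists_between (show C < S / 2 by linarith)
  obtain ⟨hdd, hdiff⟩ := line_deriv2 hv Y
  set γ := fun t : ℝ => v (z + t • Y) with hγ
  have hcd : ContDiffAt ℝ 2 γ 0 := by
    have : ContDiffAt ℝ 2 v (z + (0:ℝ) • Y) := by simpa using hv
    exact this.comp (0:ℝ) (by fun_prop)
  have hγd : ∀ᶠ t in 𝓝 (0:ℝ), DifferentiableAt ℝ γ t :=
    (hcd.eventually (by simp)).mono fun w hw => hw.differentiableAt (by norm_num)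
  have hq : ∀ t : ℝ, HasDerivAt (fun t : ℝ => C' * t ^ 2) (C' * (2 * t)) t := fun t => by
    simpa using (hasDerivAt_pow 2 t).const_mul C'
  have e1 : deriv (fun t => γ t - C' * t ^ 2) =ᶠ[𝓝 0] fun t => deriv γ t - C' * (2 * t) := by
    filter_upwards [hγd] with t ht
    exact (ht.hasDerivAt.sub (hq t)).deriv
  have e2 : deriv (deriv (fun t => γ t - C' * t ^ 2)) 0 = S - C' * 2 := by
    rw [e1.deriv_eq]
    have h7 : HasDerivAt (fun t : ℝ => C' * (2 * t)) (C' * 2) 0 := by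
      simpa using ((hasDerivAt_id (0:ℝ)).const_mul 2).const_mul C'
    exact (hdiff.hasDerivAt.sub h7).deriv.trans (by rw [hdd])
  have hmin := isLocalMin_of_deriv_deriv_pos (f := fun t => γ t - C' * t ^ 2) (x₀ := 0)
    (by rw [e2]; linarith)
    (by
      rw [e1.eq_of_nhds, (line_deriv hv Y).eq_of_nhds]
      simp [hd])
    (hγd.self_of_nhds.continuousAt.sub (by fun_prop))
  have h8 : ∀ᶠ t : ℝ in 𝓝[≠] 0, False := by
    filter_upwards [hC, hmin.filter_mono nhdsWithin_le_nhds, self_mem_nhdsWithin] with t h1 h2 h3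
    have h0 : γ 0 = 0 := by simp [hγ, hz]
    simp only [h0] at h2
    have h4 : 0 < t ^ 2 := by
      have : t ≠ 0 := h3
      positivity
    change γ t ≤ _ at h1
    nlinarith
  exact h8.exists.elim fun _ h => h


lemma leviForm_quad {n : ℕ} {v : Cn n → ℝ} {z : Cn n} {C : ℝ}
    (hv : ∀ᶠ w in 𝓝 z, v w = C * ‖w - z‖ ^ 2) (X : Cn n) :
    ContDiffAt ℝ 2 v z ∧ leviForm v z X = C * ‖X‖ ^ 2 := by
  have hq : ContDiffAt ℝ 2 (fun w : Cn n => C * ‖w - z‖ ^ 2) z :=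
    contDiffAt_const.mul ((contDiffAt_id.sub contDiffAt_const).norm_sq ℝ)
  have hcd : ContDiffAt ℝ 2 v z := hq.congr_of_eventuallyEq hv
  refine ⟨hcd, ?_⟩
  have key : ∀ Y : Cn n, iteratedFDeriv ℝ 2 v z ![Y, Y] = 2 * C * ‖Y‖ ^ 2 := by
    intro Y
    rw [← (line_deriv2 hcd Y).1]
    have hc : Tendsto (fun t : ℝ => z + t • Y) (𝓝 0) (𝓝 z) := by
      have : Continuous (fun t : ℝ => z + t • Y) := by fun_prop
      simpa using this.tendsto 0
    have e : (fun t : ℝ => v (z + t • Y)) =ᶠ[𝓝 0] fun t => C * ‖Y‖ ^ 2 * t ^ 2 := by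
      filter_upwards [hc.eventually hv] with t ht
      rw [ht, add_sub_cancel_left, norm_smul, mul_pow, Real.norm_eq_abs, sq_abs]
      ring
    rw [e.deriv.deriv_eq]
    have e2 : deriv (fun t : ℝ => C * ‖Y‖ ^ 2 * t ^ 2) = fun t => C * ‖Y‖ ^ 2 * (2 * t) := by
      funext t
      have : HasDerivAt (fun t : ℝ => C * ‖Y‖ ^ 2 * t ^ 2) (C * ‖Y‖ ^ 2 * (2 * t)) t := by
        simpa using (hasDerivAt_pow 2 t).const_mul (C * ‖Y‖ ^ 2)
      exact this.deriv
    rw [e2]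
    have : HasDerivAt (fun t : ℝ => C * ‖Y‖ ^ 2 * (2 * t)) (C * ‖Y‖ ^ 2 * 2) 0 := by
      simpa using ((hasDerivAt_id (0:ℝ)).const_mul 2).const_mul (C * ‖Y‖ ^ 2)
    rw [this.deriv]
    ring
  have hI : ‖Complex.I • X‖ = ‖X‖ := by rw [norm_smul, Complex.norm_I, one_mul]
  rw [leviForm, key, key, hI]
  ring

lemma elog_le {x C : ℝ} (h : elog x ≤ ((Real.log C : ℝ) : EReal)) (hC : 0 < C) : x ≤ C := by
  by_cases hx : x ≤ 0
  · exact hx.trans hC.le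
  · rw [elog, if_neg hx, EReal.coe_le_coe_iff] at h
    exact (Real.log_le_log_iff (not_le.1 hx) hC).1 h

lemma sib_upper {n : ℕ} {D : Set (Cn n)} (hD : IsOpen D) {v : Cn n → ℝ} {z X b : Cn n}
    (hz : z ∈ D) (hb : ‖b‖ = 1) (h01 : ∀ w ∈ D, 0 ≤ v w ∧ v w < 1) (hvz : v z = 0)
    (hpsh : PSHOn (fun w => elog (v w)) D) (hcd : ContDiffAt ℝ 2 v z)
    {κ : ℝ} (hκ : 0 < κ) (hκD : ∀ t : ℂ, ‖t‖ < 1 → z + t • ((κ : ℂ) • X) ∈ D) :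
    leviForm v z X ≤ 1 / κ ^ 2 := by
  have hmin : IsLocalMin v z := by
    filter_upwards [hD.mem_nhds hz] with w hw
    rw [hvz]
    exact (h01 w hw).1
  have hd := hmin.fderiv_eq_zero
  obtain ⟨K, hK, hquad⟩ := quad_bound hcd hvz hd
  have hhalf : (0:ℝ) < 1 / 2 := by norm_num
  have hu := hpsh.const_mul hhalf
  have hlog : ∀ᶠ x in 𝓝[D] z, (((1 / 2 : ℝ) : ℝ) : EReal) * elog (v x) ≤
      ((Real.log ‖x - z‖ + 1 / 2 * Real.log K : ℝ) : EReal) := by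
    filter_upwards [hquad.filter_mono nhdsWithin_le_nhds] with x hx
    rw [coe_mul_le_iff hhalf]
    by_cases hvx : v x ≤ 0
    · rw [elog, if_pos hvx]; exact bot_le
    · rw [elog, if_neg hvx, EReal.coe_le_coe_iff]
      push Not at hvx
      have hxz : 0 < ‖x - z‖ := by
        by_contra h
        have h0 : ‖x - z‖ = 0 := le_antisymm (not_lt.1 h) (norm_nonneg _)
        rw [h0] at hx
        norm_num at hx
        linarith
      have := Real.log_le_log hvx hx
      rw [Real.log_mul hK.ne' (by positivity), Real.log_pow] at this
      push_cast at this
      linarith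
  have hneg : ∀ x ∈ D, (((1 / 2 : ℝ) : ℝ) : EReal) * elog (v x) < 0 := by
    intro x hx
    rw [show (0 : EReal) = ((0:ℝ) : EReal) from rfl, coe_mul_lt_iff hhalf]
    by_cases hvx : v x ≤ 0
    · rw [elog, if_pos hvx]; exact EReal.bot_lt_coe _
    · rw [elog, if_neg hvx, EReal.coe_lt_coe_iff]
      have := Real.log_neg (not_le.1 hvx) (h01 x hx).2
      simpa using this
  have main : ∀ l : ℂ, l ≠ 0 → ‖l‖ < κ → v (z + l • X) ≤ 1 / κ ^ 2 * ‖l‖ ^ 2 := by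
    intro l hl hl'
    have h := family_le hD hu hneg hz hb hlog hκ hκD hl hl'
    rw [coe_mul_le_iff hhalf] at h
    have hl0 : 0 < ‖l‖ := norm_pos_iff.2 hl
    apply elog_le _ (by positivity)
    refine h.trans (le_of_eq ?_)
    congr 1
    rw [show 1 / κ ^ 2 * ‖l‖ ^ 2 = (‖l‖ / κ) ^ 2 by field_simp, Real.log_pow]
    push_cast
    ring
  have hsm : ∀ᶠ t : ℝ in 𝓝[≠] 0, t ≠ 0 ∧ |t| < κ := by
    have : ∀ᶠ t : ℝ in 𝓝 0, |t| < κ := by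
      have h := Metric.ball_mem_nhds (0:ℝ) hκ
      filter_upwards [h] with t ht
      simpa [Real.dist_eq] using ht
    filter_upwards [this.filter_mono nhdsWithin_le_nhds, self_mem_nhdsWithin] with t h1 h2
    exact ⟨h2, h1⟩
  have k1 : iteratedFDeriv ℝ 2 v z ![X, X] ≤ 2 * (1 / κ ^ 2) := by
    apply second_le hcd hvz hd
    filter_upwards [hsm] with t ht
    have := main (t : ℂ) (by exact_mod_cast ht.1) (by simpa using ht.2)
    rw [Complex.norm_real, Real.norm_eq_abs, sq_abs] at this
    simpa using this
  have k2 : iteratedFDeriv ℝ 2 v z ![Complex.I • X, Complex.I • X] ≤ 2 * (1 / κ ^ 2) := by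
    apply second_le hcd hvz hd
    filter_upwards [hsm] with t ht
    have := main ((t : ℂ) * Complex.I) (by simpa using ht.1) (by simpa using ht.2)
    rw [norm_mul, Complex.norm_I, mul_one, Complex.norm_real, Real.norm_eq_abs, sq_abs,
      mul_smul] at this
    have e : ((t : ℂ)) • (Complex.I • X) = t • (Complex.I • X) := by simp
    rwa [e] at this
  rw [leviForm]
  linarith [show 0 < 1 / κ ^ 2 by positivity]

lemma erexp_coe (x : ℝ) : erexp (x : EReal) = Real.exp x := by
  simp [erexp]

lemma erexp_bot : erexp ⊥ = 0 := by simp [erexp]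

lemma erexp_nonneg (x : EReal) : 0 ≤ erexp x := by
  unfold erexp
  split_ifs <;> positivity

lemma elog_erexp {x : EReal} (hx : x ≠ ⊤) : elog (erexp x) = x := by
  induction x with
  | bot => simp [erexp_bot, elog]
  | top => exact absurd rfl hx
  | coe x => rw [erexp_coe, elog, if_neg (not_le.2 (Real.exp_pos x)), Real.log_exp]

lemma erexp_lt_one {x : EReal} (hx : x < 0) : erexp x < 1 := by
  induction x with
  | bot => simp [erexp_bot]
  | top => simp at hx
  | coe x =>
    rw [erexp_coe]
    rw [← Real.exp_zero, Real.exp_lt_exp]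
    exact_mod_cast hx

lemma erexp_mono {x y : EReal} (hxy : x ≤ y) (hy : y ≠ ⊤) : erexp x ≤ erexp y := by
  induction x with
  | bot => rw [erexp_bot]; exact erexp_nonneg _
  | top => exact absurd (top_le_iff.1 hxy) hy
  | coe x =>
    induction y with
    | bot => simp at hxy
    | top => exact absurd rfl hy
    | coe y =>
      rw [erexp_coe, erexp_coe, Real.exp_le_exp]
      exact_mod_cast hxy

lemma PSHOn.congr {n : ℕ} {u u' : Cn n → EReal} {D : Set (Cn n)} (hu : PSHOn u D)
    (h : ∀ x ∈ D, u' x = u x) : PSHOn u' D := by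
  refine ⟨?_, ?_⟩
  · intro x hx y hy
    rw [h x hx] at hy
    filter_upwards [hu.1 x hx y hy, self_mem_nhdsWithin] with w hw hwD
    rwa [h w hwD]
  · intro a ha b r hr hsub g hg hle
    rw [h a ha]
    refine hu.2 a ha b r hr hsub g hg fun θ => ?_
    rw [← h _ (hsub _ ?_)]
    · exact hle θ
    · rw [norm_mul, Complex.norm_exp_ofReal_mul_I, mul_one, Complex.norm_real,
        Real.norm_of_nonneg hr.le]

section Final

variable {n : ℕ} {D : Set (Cn n)} {z b : Cn n} {U : Cn n → EReal} {L : ℝ}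

lemma U_log (hUlog : ∀ w, ‖w - z‖ ≤ 1 → U w = logPole z L w) :
    ∀ᶠ x in 𝓝[D] z, U x ≤ ((Real.log ‖x - z‖ + (-L) : ℝ) : EReal) := by
  have h : ∀ᶠ x in 𝓝[D] z, ‖x - z‖ < 1 := by
    have h := Metric.ball_mem_nhds z one_pos
    filter_upwards [mem_nhdsWithin_of_mem_nhds h] with x hx
    rwa [mem_ball, dist_eq_norm] at hx
  filter_upwards [h] with x hx
  rw [hUlog x hx.le, logPole]
  split_ifs
  · exact bot_le
  · exact le_of_eq rfl

lemma sibony_ge (hD : IsOpen D) (hz : z ∈ D) (hb : ‖b‖ = 1) (hU : PSHOn U D)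
    (hUneg : ∀ x ∈ D, U x < 0) (hUlog : ∀ w, ‖w - z‖ ≤ 1 → U w = logPole z L w) (X : Cn n) :
    Real.exp (-L) * ‖X‖ ≤ sibony D z X := by
  obtain ⟨κ, hκ, hκD⟩ := exists_kappa hD hz X
  have h2 : (0:ℝ) < 2 := two_pos
  have h2U := hU.const_mul h2
  have hneg : ∀ x ∈ D, ((2:ℝ) : EReal) * U x < 0 := by
    intro x hx
    rw [show (0 : EReal) = ((0:ℝ) : EReal) from rfl, coe_mul_lt_iff h2]
    simpa using hUneg x hx
  have hquad : ∀ᶠ w in 𝓝 z, erexp (((2:ℝ) : EReal) * U w) =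
      Real.exp (-L) ^ 2 * ‖w - z‖ ^ 2 := by
    filter_upwards [Metric.ball_mem_nhds z one_pos] with w hw
    rw [mem_ball, dist_eq_norm] at hw
    rw [hUlog w hw.le, logPole]
    split_ifs with h
    · rw [EReal.coe_mul_bot_of_pos h2, erexp_bot, h]
      simp
    · have : 0 < ‖w - z‖ := norm_pos_iff.2 (sub_ne_zero.2 h)
      rw [← EReal.coe_mul, erexp_coe, ← mul_pow, mul_comm 2, Real.exp_mul, sub_eq_add_neg,
        Real.exp_add, Real.exp_log this, mul_comm]
      norm_cast
  obtain ⟨hcd, hlevi⟩ := leviForm_quad hquad X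
  have hmem : Real.exp (-L) * ‖X‖ ∈ {s : ℝ | ∃ v : Cn n → ℝ, (∀ w ∈ D, 0 ≤ v w ∧ v w < 1) ∧
      v z = 0 ∧ PSHOn (fun w => elog (v w)) D ∧ (∃ W ∈ 𝓝 z, ContDiffOn ℝ 2 v W) ∧
      s = Real.sqrt (leviForm v z X)} := by
    refine ⟨fun w => erexp (((2:ℝ) : EReal) * U w),
      fun w hw => ⟨erexp_nonneg _, erexp_lt_one (hneg w hw)⟩, ?_, ?_, ?_, ?_⟩
    · exact hquad.self_of_nhds.trans (by simp)
    · exact h2U.congr fun x hx => elog_erexp ((hneg x hx).trans (by simp)).ne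
    · obtain ⟨W, hW, h⟩ := hcd.contDiffOn (m := 2) le_rfl (by simp)
      exact ⟨W, hW, h⟩
    · rw [hlevi, ← mul_pow, Real.sqrt_sq (by positivity)]
  refine le_csSup ⟨1 / κ, ?_⟩ hmem
  rintro s ⟨v, h01, hvz, hpsh, ⟨W, hW, hWc⟩, rfl⟩
  have := sib_upper hD hz hb h01 hvz hpsh (hWc.contDiffAt hW) hκ hκD
  rw [Real.sqrt_le_left (by positivity)]
  simpa using this

lemma azukawa_ge (hD : IsOpen D) (hz : z ∈ D) (hb : ‖b‖ = 1) (hU : PSHOn U D)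
    (hUneg : ∀ x ∈ D, U x < 0) (hUlog : ∀ w, ‖w - z‖ ≤ 1 → U w = logPole z L w) (X : Cn n) :
    Real.exp (-L) * ‖X‖ ≤ azukawa D z X := by
  obtain ⟨κ, hκ, hκD⟩ := exists_kappa hD hz X
  have hsm : ∀ᶠ t : ℂ in 𝓝[≠] 0, t ≠ 0 ∧ ‖t‖ < κ := by
    have : ∀ᶠ t : ℂ in 𝓝 0, ‖t‖ < κ := by
      filter_upwards [Metric.ball_mem_nhds (0:ℂ) hκ] with t ht
      simpa using ht
    filter_upwards [this.filter_mono nhdsWithin_le_nhds, self_mem_nhdsWithin] with t h1 h2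
    exact ⟨h2, h1⟩
  have hle : ∀ l : ℂ, l ≠ 0 → ‖l‖ < κ →
      greenFn D z (z + l • X) ≤ ((Real.log (‖l‖ / κ) : ℝ) : EReal) := by
    intro l hl hl'
    apply sSup_le
    rintro t ⟨u, hu, hneg, ⟨C, hC⟩, rfl⟩
    exact family_le hD hu hneg hz hb hC hκ hκD hl hl'
  have hnear : ∀ᶠ t : ℂ in 𝓝[≠] 0, ‖t • X‖ < 1 := by
    have h : Tendsto (fun t : ℂ => ‖t • X‖) (𝓝 0) (𝓝 0) := by
      have : Continuous (fun t : ℂ => ‖t • X‖) := by fun_prop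
      simpa using this.tendsto 0
    exact (h.eventually (gt_mem_nhds one_pos)).filter_mono nhdsWithin_le_nhds
  unfold azukawa
  apply le_limsup_of_frequently_le
  · apply Eventually.frequently
    filter_upwards [hsm, hnear] with l hl hl1
    have hl0 : 0 < ‖l‖ := norm_pos_iff.2 hl.1
    rw [le_div_iff₀ hl0]
    by_cases hX : X = 0
    · simp [hX, erexp_nonneg]
    have hX0 : 0 < ‖X‖ := norm_pos_iff.2 hX
    have hU1 : U (z + l • X) = ((Real.log (‖l‖ * ‖X‖) - L : ℝ) : EReal) := by
      rw [hUlog _ (by simpa using hl1.le), logPole, if_neg, add_sub_cancel_left, norm_smul]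
      simp [hl.1, hX]
    have hge : U (z + l • X) ≤ greenFn D z (z + l • X) :=
      le_sSup ⟨U, hU, hUneg, ⟨-L, U_log hUlog⟩, rfl⟩
    have hnt : greenFn D z (z + l • X) ≠ ⊤ :=
      ((hle l hl.1 hl.2).trans_lt (EReal.coe_lt_top _)).ne
    have := erexp_mono hge hnt
    rw [hU1, erexp_coe, sub_eq_add_neg, Real.exp_add, Real.exp_log (by positivity)] at this
    linarith
  · refine isBoundedUnder_of_eventually_le (a := 1 / κ) ?_
    filter_upwards [hsm] with l hl
    have hl0 : 0 < ‖l‖ := norm_pos_iff.2 hl.1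
    rw [div_le_iff₀ hl0]
    have := erexp_mono (hle l hl.1 hl.2) (EReal.coe_ne_top _)
    rw [erexp_coe, Real.exp_log (by positivity)] at this
    refine this.trans (le_of_eq ?_)
    ring

lemma kobayashi_ge (hD : IsOpen D) (hz : z ∈ D) (hU : PSHOn U D)
    (hUneg : ∀ x ∈ D, U x < 0) (hUlog : ∀ w, ‖w - z‖ ≤ 1 → U w = logPole z L w) (X : Cn n) :
    Real.exp (-L) * ‖X‖ ≤ kobayashi D z X := by
  obtain ⟨κ, hκ, hκD⟩ := exists_kappa hD hz X
  have hκ' : (κ : ℂ) ≠ 0 := by exact_mod_cast hκ.ne'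
  unfold kobayashi
  apply le_csInf
  · refine ⟨_, ((κ : ℂ))⁻¹, rfl, fun t => z + t • ((κ : ℂ) • X),
      (disc_diff z _).differentiableOn, fun t ht => hκD t (by simpa using ht), by simp, ?_⟩
    have : HasDerivAt (fun t : ℂ => z + t • ((κ : ℂ) • X)) ((κ : ℂ) • X) 0 := by
      simpa using ((hasDerivAt_id (0:ℂ)).smul_const ((κ : ℂ) • X)).const_add z
    rw [this.deriv, smul_smul, inv_mul_cancel₀ hκ', one_smul]
  · rintro c ⟨α, rfl, f, hf, hfD, hf0, hX⟩
    have hbot : U z = ⊥ := by rw [hUlog z (by simp), logPole, if_pos rfl]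
    have hfd : DifferentiableAt ℂ f 0 := hf.differentiableAt (Metric.ball_mem_nhds 0 one_pos)
    have hnear : ∀ᶠ t in 𝓝 (0:ℂ), ‖f t - z‖ < 1 := by
      have h : Tendsto (fun t : ℂ => ‖f t - z‖) (𝓝 0) (𝓝 0) := by
        have : ContinuousAt (fun t : ℂ => ‖f t - z‖) 0 :=
          (hfd.continuousAt.sub continuousAt_const).norm
        simpa [ContinuousAt, hf0] using this
      exact h.eventually (gt_mem_nhds one_pos)
    have hbd : ‖deriv f 0‖ ≤ Real.exp L := by
      refine hfd.hasDerivAt.le_of_lip' (Real.exp_pos L).le ?_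
      filter_upwards [hnear, Metric.ball_mem_nhds (0:ℂ) one_pos] with t h1 h2
      rw [hf0, sub_zero]
      by_cases ht : f t = z
      · rw [ht, sub_self, norm_zero]; positivity
      have ht0 : t ≠ 0 := fun h => ht (by rw [h, hf0])
      have ht0' : 0 < ‖t‖ := norm_pos_iff.2 ht0
      have h3 := green_le hD hU hUneg hz hbot (U_log hUlog) hf hfD hf0 ht0 (by simpa using h2)
      rw [hUlog _ h1.le, logPole, if_neg ht, EReal.coe_le_coe_iff] at h3
      have h4 : 0 < ‖f t - z‖ := norm_pos_iff.2 (sub_ne_zero.2 ht)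
      rw [← Real.log_le_log_iff h4 (by positivity), Real.log_mul (Real.exp_pos L).ne' ht0'.ne',
        Real.log_exp]
      linarith
    rw [← hX, norm_smul]
    calc Real.exp (-L) * (‖α‖ * ‖deriv f 0‖) ≤ Real.exp (-L) * (‖α‖ * Real.exp L) := by gcongr
      _ = ‖α‖ * (Real.exp (-L) * Real.exp L) := by ring
      _ = ‖α‖ := by rw [← Real.exp_add]; simp

end Final


/-- If `∞` is a psh peak point of an unbounded domain `D`, then every
bounded subset of `D` is uniformly hyperbolic for the Sibony (hence Azukawa and
Kobayashi) metric. -/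
theorem metrics_lower_bound_at_infty_peak {n : ℕ} (D : Set (Cn n)) (hD : IsOpen D)
    (hDconn : IsConnected D) (hDunb : ¬ Bornology.IsBounded D)
    (hφ : ∃ φ : Cn n → EReal, IsPshPeakFnAtInfty D φ) :
    ∀ r : ℝ, 0 < r → ∃ c : ℝ, 0 < c ∧ ∀ z ∈ D, ‖z‖ < r → ∀ X : Cn n,
      c * ‖X‖ ≤ sibony D z X ∧ c * ‖X‖ ≤ azukawa D z X ∧ c * ‖X‖ ≤ kobayashi D z X := by
  intro r hr
  obtain ⟨φ, hφ⟩ := hφ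
  obtain ⟨L, hL⟩ := peak_construct hD hφ hr
  have hn : n ≠ 0 := by
    rintro rfl
    exact hDunb (Set.toFinite D).isBounded
  have hb : ‖EuclideanSpace.single (⟨0, Nat.pos_of_ne_zero hn⟩ : Fin n) (1 : ℂ)‖ = 1 := by simp
  refine ⟨Real.exp (-L), Real.exp_pos _, fun z hz hzr X => ?_⟩
  obtain ⟨U, hU, hUneg, hUlog⟩ := hL z hz hzr
  exact ⟨sibony_ge hD hz hb hU hUneg hUlog X, azukawa_ge hD hz hb hU hUneg hUlog X,
    kobayashi_ge hD hz hU hUneg hUlog X⟩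
end
end

section
/- Let D be a domain in ℂⁿ and U an open set with D ∩ U ≠ ∅ and D ∖ U ≠ ∅. Then for every z ∈ D ∩ U and X ∈ ℂⁿ one has K_D(z;X) ≥ K_{D∩U}(z;X) · inf_{w ∈ D ∩ ∂U} exp(g_D(w,z)). -/
open Set Metric Filter Topology
open scoped Classical

noncomputable section

open InnerProductSpace in
lemma local_contra_s10 {n : ℕ} {D : Set (Cn n)} {u : Cn n → EReal} (hu : PSHOn u D)
    {F : ℂ → Cn n} {H : ℂ → ℝ} {ζ₀ : ℂ} {x₀ : Cn n} {ε k m : ℝ} (hε : 0 < ε) (hk : 0 ≤ k)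
    (hD : D ∈ 𝓝 x₀) (hF : AnalyticAt ℂ F ζ₀) (hH : HarmonicAt H ζ₀) (hm : u x₀ = (m : EReal))
    (hmax : ∀ᶠ p : ℂ × Cn n in 𝓝 (ζ₀, x₀), u p.2 ≤ ((m +
      ((H p.1 + ε * (1 - ‖p.1‖ ^ 2)) - (H ζ₀ + ε * (1 - ‖ζ₀‖ ^ 2)))
        + k * (‖p.2 - F p.1‖ ^ 2 - ‖x₀ - F ζ₀‖ ^ 2) : ℝ) : EReal)) : False := by
  set b := deriv F ζ₀ with hb
  set h₀ := x₀ - F ζ₀ with hh₀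
  set e : ℂ → Cn n := fun ζ => (ζ - ζ₀) • b - (F ζ - F ζ₀) with he
  set P : ℂ → ℂ := fun ζ => 2 * k * inner ℂ h₀ (e ζ)
    - 2 * ε * (starRingEnd ℂ ζ₀ * (ζ - ζ₀)) with hP
  have hean : AnalyticAt ℂ e ζ₀ := by
    have : AnalyticAt ℂ (fun ζ : ℂ => (ζ - ζ₀) • b) ζ₀ := by fun_prop
    exact this.sub (hF.sub analyticAt_const)
  have hPan : AnalyticAt ℂ P ζ₀ := by
    have h1 : AnalyticAt ℂ (fun ζ => inner ℂ h₀ (e ζ)) ζ₀ :=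
      ((innerSL ℂ h₀).analyticAt _).comp hean
    have h2 : AnalyticAt ℂ (fun ζ : ℂ => 2 * ε * (starRingEnd ℂ ζ₀ * (ζ - ζ₀))) ζ₀ := by
      fun_prop
    exact (analyticAt_const.mul h1).sub h2
  have hG : HarmonicAt (H + fun ζ => (P ζ).re) ζ₀ := hH.add hPan.harmonicAt_re
  have hcurve : Tendsto (fun ζ : ℂ => (ζ, x₀ + (ζ - ζ₀) • b)) (𝓝 ζ₀) (𝓝 (ζ₀, x₀)) := by
    have : ContinuousAt (fun ζ : ℂ => (ζ, x₀ + (ζ - ζ₀) • b)) ζ₀ := by fun_prop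
    simpa [ContinuousAt] using this
  have hDc : ∀ᶠ ζ in 𝓝 ζ₀, x₀ + (ζ - ζ₀) • b ∈ D :=
    (continuous_snd.continuousAt.tendsto.comp hcurve).eventually hD
  have hsmall : ∀ᶠ ζ in 𝓝 ζ₀, k * ‖e ζ‖ ^ 2 ≤ ε / 2 * ‖ζ - ζ₀‖ ^ 2 := by
    have hd := hF.differentiableAt.hasDerivAt
    have hc : 0 < √(ε / (2 * (k + 1))) := by positivity
    have := hd.isLittleO.def hc
    filter_upwards [this] with ζ hζ
    have h1 : ‖e ζ‖ ≤ √(ε / (2 * (k + 1))) * ‖ζ - ζ₀‖ := by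
      have : e ζ = -(F ζ - F ζ₀ - (ζ - ζ₀) • deriv F ζ₀) := by simp [he, hb]
      rw [this, norm_neg]; simpa using hζ
    have h2 : ‖e ζ‖ ^ 2 ≤ ε / (2 * (k + 1)) * ‖ζ - ζ₀‖ ^ 2 := by
      calc ‖e ζ‖ ^ 2 ≤ (√(ε / (2 * (k + 1))) * ‖ζ - ζ₀‖) ^ 2 := by gcongr
        _ = _ := by rw [mul_pow, Real.sq_sqrt (by positivity)]
    calc k * ‖e ζ‖ ^ 2 ≤ (k + 1) * ‖e ζ‖ ^ 2 := by gcongr; linarith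
      _ ≤ (k + 1) * (ε / (2 * (k + 1)) * ‖ζ - ζ₀‖ ^ 2) := by gcongr
      _ = _ := by field_simp
  have hall := (((hcurve.eventually hmax).and hDc).and hsmall).and hG.eventually
  obtain ⟨R, hR, hball⟩ := Metric.eventually_nhds_iff_ball.1 hall
  set r := R / 2 with hr
  have hr0 : 0 < r := by positivity
  have hsub : ∀ ζ, ‖ζ - ζ₀‖ ≤ r → ζ ∈ ball ζ₀ R := by
    intro ζ hζ
    rw [mem_ball, dist_eq_norm]; linarith
  have hharm : HarmonicOnNhd (H + fun ζ => (P ζ).re) (closedBall ζ₀ |r|) := by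
    intro ζ hζ
    rw [abs_of_pos hr0, mem_closedBall, dist_eq_norm] at hζ
    exact (hball ζ (hsub ζ hζ)).2
  have hcirc : ∀ θ : ℝ, ‖circleMap ζ₀ r θ - ζ₀‖ = r := by
    intro θ; simp [circleMap, abs_of_pos hr0]
  have hmean := hharm.circleAverage_eq
  set G := H + fun ζ => (P ζ).re with hGdef
  have hcont : Continuous fun θ => G (circleMap ζ₀ r θ) := by
    rw [continuous_iff_continuousAt]
    intro θ
    have h1 : ContinuousAt G (circleMap ζ₀ r θ) :=
      (hball _ (hsub _ (hcirc θ).le)).2.1.continuousAt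
    exact h1.comp (f := circleMap ζ₀ r) (continuous_circleMap ζ₀ r).continuousAt
  have key := hu.2 x₀ (mem_of_mem_nhds hD) b r hr0 (fun t ht => by
    have := (hball (ζ₀ + t) (hsub _ (by simpa using ht))).1.1.2
    simpa using this) (fun θ => (m - H ζ₀ - ε / 2 * r ^ 2) + G (circleMap ζ₀ r θ))
    (continuous_const.add hcont) (fun θ => by
      have h := hball _ (hsub _ (hcirc θ).le)
      have h1 := h.1.1.1
      have h2 := h.1.2
      rw [hcirc θ] at h2
      have h3 : circleMap ζ₀ r θ - ζ₀ = (r : ℂ) * Complex.exp (θ * Complex.I) := by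
        simp [circleMap]
      rw [← h3]
      refine h1.trans (EReal.coe_le_coe_iff.2 ?_)
      set ζ := circleMap ζ₀ r θ
      have h4 : x₀ + (ζ - ζ₀) • b - F ζ = h₀ + e ζ := by simp only [hh₀, he]; abel
      have h5 : ‖h₀ + e ζ‖ ^ 2 = ‖h₀‖ ^ 2 + 2 * (inner ℂ h₀ (e ζ)).re + ‖e ζ‖ ^ 2 := by
        have := norm_add_sq (𝕜 := ℂ) h₀ (e ζ)
        simpa using this
      have h6 : ‖ζ‖ ^ 2 = ‖ζ₀‖ ^ 2 + 2 * (starRingEnd ℂ ζ₀ * (ζ - ζ₀)).re + r ^ 2 := by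
        rw [← hcirc θ, Complex.sq_norm, Complex.sq_norm, Complex.sq_norm]
        simp only [Complex.normSq_apply, Complex.mul_re, Complex.conj_re, Complex.conj_im,
          Complex.sub_re, Complex.sub_im]
        ring
      have h7 : (P ζ).re = 2 * k * (inner ℂ h₀ (e ζ)).re
          - 2 * ε * (starRingEnd ℂ ζ₀ * (ζ - ζ₀)).re := by
        simp only [hP, Complex.sub_re]
        rw [show (2 * k : ℂ) = ((2 * k : ℝ) : ℂ) by push_cast; ring,
          show (2 * ε : ℂ) = ((2 * ε : ℝ) : ℂ) by push_cast; ring,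
          Complex.re_ofReal_mul, Complex.re_ofReal_mul]
      have h8 : G ζ = H ζ + (P ζ).re := rfl
      simp only
      rw [h4, h5, h6, h8, h7]
      nlinarith)
  have hG0 : G ζ₀ = H ζ₀ := by simp [hGdef, hP, he]
  rw [hm, EReal.coe_le_coe_iff, intervalIntegral.integral_add (by simp)
    (hcont.intervalIntegrable _ _), intervalIntegral.integral_const] at key
  rw [Real.circleAverage_def, hG0, smul_eq_mul] at hmean
  have hpi := Real.pi_pos
  have : (1 / (2 * Real.pi)) * ((2 * Real.pi - 0) • (m - H ζ₀ - ε / 2 * r ^ 2)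
    + ∫ θ in (0:ℝ)..(2 * Real.pi), G (circleMap ζ₀ r θ)) = m - ε / 2 * r ^ 2 := by
    rw [mul_add, one_div, hmean, smul_eq_mul]; field_simp; ring
  rw [this] at key
  have : 0 < ε / 2 * r ^ 2 := by positivity
  linarith

open InnerProductSpace in
lemma disc_comparison {n : ℕ} {D : Set (Cn n)} (hD : IsOpen D) {u : Cn n → EReal}
    (hu : PSHOn u D) (hneg : ∀ x ∈ D, u x < 0)
    {F : ℂ → Cn n} (hF : DifferentiableOn ℂ F (ball 0 1)) (hFD : MapsTo F (ball 0 1) D)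
    {K : Set ℂ} (hK : IsCompact K) (hK1 : K ⊆ ball 0 1) {H : ℂ → ℝ}
    (hH : ∀ ζ ∈ K, HarmonicAt H ζ)
    (hb : ∀ ζ ∈ K, u (F ζ) ≤ (H ζ : EReal) ∨ K ∈ 𝓝 ζ) :
    ∀ ζ ∈ K, u (F ζ) ≤ (H ζ : EReal) := by
  by_contra hcon
  push Not at hcon
  obtain ⟨ζs, hζs, hlt⟩ := hcon
  have hreal : ∀ x ∈ D, u x ≠ ⊥ → u x = ((u x).toReal : EReal) := fun x hx h =>
    (EReal.coe_toReal ((hneg x hx).trans EReal.zero_lt_top).ne h).symm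
  set v := (u (F ζs)).toReal with hv
  have hvs : u (F ζs) = (v : EReal) :=
    hreal _ (hFD (hK1 hζs)) (ne_bot_of_gt hlt)
  rw [hvs, EReal.coe_lt_coe_iff] at hlt
  set ε := (v - H ζs) / 2 with hεd
  have hε : 0 < ε := by rw [hεd]; linarith
  set q : ℂ → ℝ := fun ζ => H ζ + ε * (1 - ‖ζ‖ ^ 2) with hq
  have hqH : ∀ ζ ∈ K, H ζ ≤ q ζ := by
    intro ζ hζ
    have : ‖ζ‖ < 1 := by simpa using hK1 hζ
    have : 0 ≤ 1 - ‖ζ‖ ^ 2 := by nlinarith [norm_nonneg ζ]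
    simp only [hq]; nlinarith
  set s := v - q ζs with hs
  have hs0 : 0 < s := by
    have : q ζs ≤ H ζs + ε := by
      simp only [hq]; nlinarith [sq_nonneg ‖ζs‖]
    rw [hs]; linarith
  have hFc : ContinuousOn F K := hF.continuousOn.mono hK1
  have hHc : ContinuousOn H K := fun ζ hζ => (hH ζ hζ).1.continuousAt.continuousWithinAt
  have hqc : ContinuousOn q K := by
    have : ContinuousOn (fun ζ : ℂ => ε * (1 - ‖ζ‖ ^ 2)) K := by fun_prop
    exact hHc.add this
  have hFK : IsCompact (F '' K) := hK.image_of_continuousOn hFc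
  obtain ⟨δ, hδ, hδD⟩ := hFK.exists_cthickening_subset_open hD
    (by rintro _ ⟨ζ, hζ, rfl⟩; exact hFD (hK1 hζ))
  set L := cthickening δ (F '' K) with hL
  have hLc : IsCompact L := hFK.cthickening
  have hLn : ∀ ζ ∈ K, L ∈ 𝓝 (F ζ) := fun ζ hζ =>
    mem_of_superset (isOpen_thickening.mem_nhds (self_subset_thickening hδ _ (mem_image_of_mem F hζ)))
      (thickening_subset_cthickening δ _)
  have hKL : IsCompact (K ×ˢ L) := hK.prod hLc
  have hdc : ContinuousOn (fun p : ℂ × Cn n => ‖p.2 - F p.1‖ ^ 2) (K ×ˢ L) := by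
    have : ContinuousOn (fun p : ℂ × Cn n => F p.1) (K ×ˢ L) :=
      hFc.comp continuousOn_fst (fun p hp => hp.1)
    exact ((continuousOn_snd.sub this).norm).pow 2
  have hqc' : ContinuousOn (fun p : ℂ × Cn n => q p.1) (K ×ˢ L) :=
    hqc.comp continuousOn_fst (fun p hp => hp.1)
  have husc : UpperSemicontinuousOn (fun p : ℂ × Cn n => u p.2) (K ×ˢ L) := by
    intro p hp y hy
    have h1 := hu.1 p.2 (hδD hp.2) y hy
    rw [hD.nhdsWithin_eq (hδD hp.2)] at h1
    exact (continuous_snd.continuousAt.tendsto.eventually h1).filter_mono nhdsWithin_le_nhds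
  have hex : ∀ k : ℕ, ∃ p ∈ K ×ˢ L, IsMaxOn (fun p : ℂ × Cn n =>
      u p.2 + ((-q p.1 - k * ‖p.2 - F p.1‖ ^ 2 : ℝ) : EReal)) (K ×ˢ L) p := by
    intro k
    refine UpperSemicontinuousOn.exists_isMaxOn ⟨(ζs, F ζs), hζs, mem_of_mem_nhds (hLn _ hζs)⟩
      hKL ?_
    refine husc.add' ?_ ?_
    · have : ContinuousOn (fun p : ℂ × Cn n => ((-q p.1 - k * ‖p.2 - F p.1‖ ^ 2 : ℝ) : EReal))
          (K ×ˢ L) :=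
        continuous_coe_real_ereal.comp_continuousOn
          (hqc'.neg.sub (continuousOn_const.mul hdc))
      exact this.upperSemicontinuousOn
    · intro p hp
      exact EReal.continuousAt_add (Or.inr (EReal.coe_ne_bot _)) (Or.inr (EReal.coe_ne_top _))
  choose p hpm hpmax using hex
  have hstar : ∀ k : ℕ, (s : EReal) ≤
      u (p k).2 + ((-q (p k).1 - k * ‖(p k).2 - F (p k).1‖ ^ 2 : ℝ) : EReal) := by
    intro k
    have := hpmax k (show (ζs, F ζs) ∈ K ×ˢ L from ⟨hζs, mem_of_mem_nhds (hLn _ hζs)⟩)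
    simp only [mem_ofPred_eq, hvs] at this
    refine le_trans (le_of_eq ?_) this
    rw [← EReal.coe_add, EReal.coe_eq_coe_iff]
    simp [hs, sub_eq_add_neg]
  set a : ℕ → ℝ := fun k => (u (p k).2).toReal with ha
  have hak : ∀ k, u (p k).2 = (a k : EReal) := by
    intro k
    refine hreal _ (hδD (hpm k).2) ?_
    intro h
    have := hstar k
    rw [h, EReal.bot_add] at this
    exact EReal.coe_ne_bot _ (le_bot_iff.1 this)
  have ha0 : ∀ k, a k < 0 := by
    intro k
    have := hneg _ (hδD (hpm k).2)
    rw [hak k] at this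
    exact_mod_cast this
  have h1 : ∀ k : ℕ, s + q (p k).1 + k * ‖(p k).2 - F (p k).1‖ ^ 2 ≤ a k := by
    intro k
    have := hstar k
    rw [hak k, ← EReal.coe_add, EReal.coe_le_coe_iff] at this
    linarith
  obtain ⟨B, hB⟩ : ∃ B, ∀ ζ ∈ K, -B ≤ q ζ := by
    obtain ⟨B, hB⟩ := hK.bddBelow_image hqc
    exact ⟨-B, fun ζ hζ => by rw [neg_neg]; exact hB ⟨ζ, hζ, rfl⟩⟩
  obtain ⟨⟨ζi, xi⟩, hi, φ, hφ, hlim⟩ := hKL.tendsto_subseq hpm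
  have hlimw : Tendsto (p ∘ φ) atTop (𝓝[K ×ˢ L] (ζi, xi)) :=
    tendsto_nhdsWithin_iff.2 ⟨hlim, Eventually.of_forall fun j => hpm _⟩
  have hxi : xi = F ζi := by
    have t1 : Tendsto (fun j => ‖(p (φ j)).2 - F (p (φ j)).1‖ ^ 2) atTop
        (𝓝 (‖xi - F ζi‖ ^ 2)) := (hdc _ hi).tendsto.comp hlimw
    have t2 : Tendsto (fun j => B / (φ j : ℝ)) atTop (𝓝 0) :=
      tendsto_const_nhds.div_atTop (tendsto_natCast_atTop_atTop.comp hφ.tendsto_atTop)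
    have t3 : ‖xi - F ζi‖ ^ 2 ≤ 0 := by
      refine le_of_tendsto_of_tendsto t1 t2 ?_
      filter_upwards [eventually_gt_atTop 0] with j hj
      have : (0:ℝ) < φ j := by exact_mod_cast hj.trans_le (hφ.id_le j)
      rw [le_div_iff₀ this]
      have := h1 (φ j)
      have := ha0 (φ j)
      have := hB _ (hpm (φ j)).1
      nlinarith
    have : ‖xi - F ζi‖ = 0 := by nlinarith [norm_nonneg (xi - F ζi)]
    exact sub_eq_zero.1 (norm_eq_zero.1 this)
  subst hxi
  have hge : ((q ζi + s : ℝ) : EReal) ≤ u (F ζi) := by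
    by_contra hlt'
    push Not at hlt'
    obtain ⟨y, hy1, hy2⟩ := EReal.lt_iff_exists_real_btwn.1 hlt'
    rw [EReal.coe_lt_coe_iff] at hy2
    have e1 := hlimw.eventually (husc _ hi y hy1)
    have e2 : ∀ᶠ j in atTop, y - s < q (p (φ j)).1 :=
      ((hqc' _ hi).tendsto.comp hlimw).eventually (lt_mem_nhds (by simp only; linarith))
    obtain ⟨j, hj1, hj2⟩ := (e1.and e2).exists
    simp only [Function.comp] at hj1
    rw [hak, EReal.coe_lt_coe_iff] at hj1
    have := h1 (φ j)
    have : 0 ≤ (φ j : ℝ) * ‖(p (φ j)).2 - F (p (φ j)).1‖ ^ 2 := by positivity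
    linarith
  have hKn : K ∈ 𝓝 ζi := by
    rcases hb ζi hi.1 with h | h
    · exfalso
      have := EReal.coe_le_coe_iff.1 (hge.trans h)
      have := hqH ζi hi.1
      linarith
    · exact h
  have hKLn : K ×ˢ L ∈ 𝓝 (ζi, F ζi) := prod_mem_nhds hKn (hLn _ hi.1)
  obtain ⟨j, hj⟩ := (hlim.eventually (eventually_mem_nhds_iff.2 hKLn)).exists
  simp only [Function.comp] at hj
  set k := φ j
  have hk1 : (p k).1 ∈ ball (0:ℂ) 1 := hK1 (hpm k).1
  refine local_contra_s10 hu (F := F) (H := H) (ζ₀ := (p k).1) (x₀ := (p k).2) (ε := ε) (k := k)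
    (m := a k) hε (Nat.cast_nonneg _) (hD.mem_nhds (hδD (hpm k).2))
    (hF.analyticAt (isOpen_ball.mem_nhds hk1)) (hH _ (hpm k).1) (hak k) ?_
  filter_upwards [hj] with p' hp'
  have h2 := hpmax k hp'
  simp only [mem_ofPred_eq, hak] at h2
  rcases eq_or_ne (u p'.2) ⊥ with hbot | hbot
  · rw [hbot]; exact bot_le
  · rw [hreal _ (hδD hp'.2) hbot] at h2 ⊢
    rw [← EReal.coe_add, ← EReal.coe_add, EReal.coe_le_coe_iff] at h2
    rw [EReal.coe_le_coe_iff]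
    simp only [hq] at h2
    linarith

lemma psh_pole_bot {n : ℕ} {D : Set (Cn n)} (hD : IsOpen D) {u : Cn n → EReal}
    (hu : PSHOn u D) {w b : Cn n} (hw : w ∈ D) (hb : b ≠ 0) {C : ℝ}
    (hC : ∀ᶠ x in 𝓝 w, u x ≤ ((Real.log ‖x - w‖ + C : ℝ) : EReal)) : u w = ⊥ := by
  have hbn : 0 < ‖b‖ := norm_pos_iff.2 hb
  obtain ⟨R, hR, hball⟩ := Metric.eventually_nhds_iff_ball.1 (hC.and (hD.mem_nhds hw))
  have hle : ∀ r : ℝ, 0 < r → r * ‖b‖ < R →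
      u w ≤ ((Real.log (r * ‖b‖) + C : ℝ) : EReal) := by
    intro r hr hrR
    have key := hu.2 w hw b r hr (fun t ht => by
      refine (hball _ ?_).2
      rw [mem_ball, dist_eq_norm, add_sub_cancel_left, norm_smul]
      exact (mul_le_mul_of_nonneg_right ht hbn.le).trans_lt hrR)
      (fun _ => Real.log (r * ‖b‖) + C) continuous_const (fun θ => by
        have hn : ‖((r : ℂ) * Complex.exp (θ * Complex.I)) • b‖ = r * ‖b‖ := by
          rw [norm_smul, norm_mul, Complex.norm_exp_ofReal_mul_I]
          simp [abs_of_pos hr]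
        have := (hball (w + ((r : ℂ) * Complex.exp (θ * Complex.I)) • b) (by
          rw [mem_ball, dist_eq_norm, add_sub_cancel_left, hn]; exact hrR)).1
        rwa [add_sub_cancel_left, hn] at this)
    refine key.trans (le_of_eq ?_)
    rw [EReal.coe_eq_coe_iff, intervalIntegral.integral_const, smul_eq_mul]
    have := Real.pi_pos
    field_simp
    ring
  have ht : Tendsto (fun r : ℝ => Real.log (r * ‖b‖) + C) (𝓝[>] 0) atBot := by
    refine tendsto_atBot_add_const_right _ _ (Real.tendsto_log_nhdsGT_zero.comp ?_)
    refine tendsto_nhdsWithin_iff.2 ⟨?_, ?_⟩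
    · have : ContinuousAt (fun r : ℝ => r * ‖b‖) 0 := by fun_prop
      have h := this.tendsto
      rw [zero_mul] at h
      exact h.mono_left nhdsWithin_le_nhds
    · filter_upwards [self_mem_nhdsWithin] with r hr
      exact mul_pos hr hbn
  have hs : ∀ᶠ r in 𝓝[>] (0:ℝ), r * ‖b‖ < R := by
    have : ContinuousAt (fun r : ℝ => r * ‖b‖) 0 := by fun_prop
    exact (this.eventually_lt continuousAt_const (by simpa using hR)).filter_mono
      nhdsWithin_le_nhds
  rw [EReal.eq_bot_iff_forall_lt]
  intro y
  obtain ⟨r, ⟨h1, h2⟩, h3⟩ := ((ht.eventually_lt_atBot y).and hs |>.and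
    self_mem_nhdsWithin).exists
  exact (hle r h3 h2).trans_lt (EReal.coe_lt_coe_iff.2 h1)

lemma green_le_s10 {n : ℕ} {D : Set (Cn n)} (hD : IsOpen D) {f : ℂ → Cn n}
    (hf : DifferentiableOn ℂ f (ball 0 1)) (hfD : MapsTo f (ball 0 1) D)
    {a : ℂ} (ha0 : a ≠ 0) (ha1 : ‖a‖ < 1) (hne : f 0 ≠ f a) :
    greenFn D (f a) (f 0) ≤ (Real.log ‖a‖ : EReal) := by
  refine sSup_le ?_
  rintro _ ⟨u, hu, hneg, ⟨C, hC⟩, rfl⟩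
  have ha : 0 < ‖a‖ := norm_pos_iff.2 ha0
  have hwD : f a ∈ D := hfD (by simpa using ha1)
  rw [hD.nhdsWithin_eq hwD] at hC
  have hbot := psh_pole_bot hD hu hwD (sub_ne_zero.2 hne) hC
  set ψ : ℂ → ℂ := fun ζ => (a - ζ) / (1 - starRingEnd ℂ a * ζ) with hψ
  have hden : ∀ ζ : ℂ, ‖ζ‖ < 1 → 1 - starRingEnd ℂ a * ζ ≠ 0 := by
    intro ζ hζ h
    have h1 : starRingEnd ℂ a * ζ = 1 := (sub_eq_zero.1 h).symm
    have h2 := congrArg norm h1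
    rw [norm_mul, RCLike.norm_conj, norm_one] at h2
    nlinarith [norm_nonneg ζ]
  have hψd : DifferentiableOn ℂ ψ (ball 0 1) := by
    intro ζ hζ
    have : ‖ζ‖ < 1 := by simpa using hζ
    have h1 : DifferentiableAt ℂ (fun ζ : ℂ => a - ζ) ζ := by fun_prop
    have h2 : DifferentiableAt ℂ (fun ζ : ℂ => 1 - starRingEnd ℂ a * ζ) ζ := by fun_prop
    exact (h1.div h2 (hden ζ this)).differentiableWithinAt
  have hψm : MapsTo ψ (ball 0 1) (ball 0 1) := by
    intro ζ hζ
    have hζ1 : ‖ζ‖ < 1 := by simpa using hζ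
    have hd := hden ζ hζ1
    rw [mem_ball_zero_iff, hψ]
    simp only
    rw [norm_div, div_lt_one (norm_pos_iff.2 hd)]
    have e : ‖1 - starRingEnd ℂ a * ζ‖ ^ 2 - ‖a - ζ‖ ^ 2 = (1 - ‖a‖ ^ 2) * (1 - ‖ζ‖ ^ 2) := by
      rw [Complex.sq_norm, Complex.sq_norm, Complex.sq_norm, Complex.sq_norm]
      simp [Complex.normSq_apply]
      ring
    have : 0 < (1 - ‖a‖ ^ 2) * (1 - ‖ζ‖ ^ 2) := by
      apply mul_pos <;> nlinarith [norm_nonneg a, norm_nonneg ζ]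
    exact lt_of_pow_lt_pow_left₀ 2 (norm_nonneg _) (by linarith)
  set F : ℂ → Cn n := f ∘ ψ with hFdef
  have hFd : DifferentiableOn ℂ F (ball 0 1) := hf.comp hψd hψm
  have hFD : MapsTo F (ball 0 1) D := hfD.comp hψm
  have hF0 : F 0 = f a := by simp [hFdef, hψ]
  have hFa : F a = f 0 := by simp [hFdef, hψ]
  have hFdiff : DifferentiableAt ℂ F 0 :=
    hFd.differentiableAt (isOpen_ball.mem_nhds (by simp))
  obtain ⟨M, hM, hMle⟩ := hFdiff.isBigO_sub.exists_pos
  have hnear : ∀ᶠ ζ in 𝓝 (0:ℂ), u (F ζ) ≤ ((Real.log ‖F ζ - f a‖ + C : ℝ) : EReal) ∧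
      ‖F ζ - f a‖ ≤ M * ‖ζ‖ := by
    have hc := hFdiff.continuousAt.tendsto
    rw [hF0] at hc
    refine (hc.eventually hC).and ?_
    filter_upwards [hMle.bound] with ζ hζ
    simpa [hF0] using hζ
  obtain ⟨R, hR, hball⟩ := Metric.eventually_nhds_iff_ball.1 hnear
  have main : ∀ t : ℝ, 0 < t → t < 1 - ‖a‖ →
      u (f 0) ≤ (((1 - t) * (Real.log ‖a‖ - Real.log (1 - t)) : ℝ) : EReal) := by
    intro t ht hta
    have hρ0 : 0 < 1 - t := by linarith
    have hδ : ∀ᶠ δ in 𝓝[>] (0:ℝ), t * Real.log δ < -Real.log M - C :=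
      (Real.tendsto_log_nhdsGT_zero.const_mul_atBot ht).eventually_lt_atBot _
    have hδ2 : ∀ᶠ δ in 𝓝[>] (0:ℝ), δ < min R ‖a‖ :=
      (gt_mem_nhds (lt_min hR ha)).filter_mono nhdsWithin_le_nhds
    obtain ⟨δ, ⟨h1, h2⟩, h3⟩ := (hδ.and hδ2 |>.and self_mem_nhdsWithin).exists
    have hδ0 : 0 < δ := h3
    have hδR : δ < R := h2.trans_le (min_le_left _ _)
    have hδa : δ < ‖a‖ := h2.trans_le (min_le_right _ _)
    have hlogρ : Real.log (1 - t) ≤ 0 := Real.log_nonpos hρ0.le (by linarith)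
    set K : Set ℂ := closedBall 0 (1 - t) \ ball 0 δ with hK
    have hKc : IsCompact K := (isCompact_closedBall _ _).diff isOpen_ball
    have hKm : ∀ ζ, ζ ∈ K ↔ ‖ζ‖ ≤ 1 - t ∧ δ ≤ ‖ζ‖ := by
      intro ζ; simp [hK]
    have := disc_comparison hD hu hneg hFd hFD hKc
      (fun ζ hζ => by have := ((hKm ζ).1 hζ).1; rw [mem_ball_zero_iff]; linarith)
      (H := fun ζ => (1 - t) * (Real.log ‖ζ‖ - Real.log (1 - t)))
      (fun ζ hζ => by
        have hζ0 : ζ ≠ 0 := norm_pos_iff.1 (hδ0.trans_le ((hKm ζ).1 hζ).2)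
        have h := AnalyticAt.harmonicAt_log_norm (f := fun ζ : ℂ => ζ) (z := ζ)
          (by fun_prop) hζ0
        exact (h.sub (InnerProductSpace.harmonicAt_const (Real.log (1 - t)))).const_smul
          (c := 1 - t))
      (fun ζ hζ => by
        have hm := (hKm ζ).1 hζ
        rcases eq_or_lt_of_le hm.1 with h | h
        · left
          rw [h, sub_self, mul_zero]
          exact (hneg _ (hFD (by rw [mem_ball_zero_iff]; linarith))).le
        rcases eq_or_lt_of_le hm.2 with h' | h'
        · left
          by_cases hFw : F ζ = f a
          · rw [hFw, hbot]; exact bot_le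
          obtain ⟨g1, g2⟩ := hball ζ (by rw [mem_ball_zero_iff]; linarith)
          refine g1.trans (EReal.coe_le_coe_iff.2 ?_)
          have g3 : Real.log ‖F ζ - f a‖ ≤ Real.log (M * ‖ζ‖) :=
            Real.log_le_log (norm_pos_iff.2 (sub_ne_zero.2 hFw)) g2
          rw [← h', Real.log_mul hM.ne' hδ0.ne'] at g3
          rw [← h']
          nlinarith
        · right
          have o : IsOpen {ζ : ℂ | ‖ζ‖ < 1 - t ∧ δ < ‖ζ‖} :=
            (isOpen_lt continuous_norm continuous_const).inter
              (isOpen_lt continuous_const continuous_norm)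
          exact mem_of_superset (o.mem_nhds ⟨h, h'⟩)
            (fun x hx => (hKm x).2 ⟨hx.1.le, hx.2.le⟩))
      a ((hKm a).2 ⟨by linarith, hδa.le⟩)
    rwa [hFa] at this
  have hlim : Tendsto (fun t : ℝ =>
      (((1 - t) * (Real.log ‖a‖ - Real.log (1 - t)) : ℝ) : EReal)) (𝓝[>] 0)
      (𝓝 (Real.log ‖a‖ : EReal)) := by
    have hc : ContinuousAt (fun t : ℝ => (1 - t) * (Real.log ‖a‖ - Real.log (1 - t))) 0 := by
      have h1 : ContinuousAt (fun t : ℝ => Real.log (1 - t)) 0 :=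
        ContinuousAt.log (by fun_prop) (by norm_num)
      have h2 : ContinuousAt (fun t : ℝ => 1 - t) 0 := by fun_prop
      exact h2.mul (continuousAt_const.sub h1)
    have h := hc.tendsto
    simp only [sub_zero, Real.log_one, one_mul] at h
    exact (continuous_coe_real_ereal.continuousAt.tendsto.comp h).mono_left nhdsWithin_le_nhds
  refine ge_of_tendsto hlim ?_
  have hs : ∀ᶠ t in 𝓝[>] (0:ℝ), t < 1 - ‖a‖ :=
    (gt_mem_nhds (by linarith)).filter_mono nhdsWithin_le_nhds
  filter_upwards [hs, self_mem_nhdsWithin] with t h1 h2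
  exact main t h2 h1

lemma erexp_le {x : EReal} {c : ℝ} (hc : 0 < c) (h : x ≤ (Real.log c : EReal)) :
    erexp x ≤ c := by
  unfold erexp
  split_ifs with h1 h2
  · exact hc.le
  · exact hc.le
  · rw [← EReal.coe_toReal h2 h1, EReal.coe_le_coe_iff] at h
    exact (Real.exp_le_exp.2 h).trans (Real.exp_log hc).le

lemma exists_frontier {E : Type*} [TopologicalSpace E] {s U : Set E} (hs : IsPreconnected s)
    (hU : IsOpen U) (h1 : (s ∩ U).Nonempty) (h2 : (s \ U).Nonempty) :
    (s ∩ frontier U).Nonempty := by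
  by_contra hcon
  rw [not_nonempty_iff_eq_empty] at hcon
  have hno : ∀ x ∈ s, x ∈ closure U → x ∈ U := by
    intro x hx hc
    by_contra hxU
    have : x ∈ s ∩ frontier U := ⟨hx, by rw [hU.frontier_eq]; exact ⟨hc, hxU⟩⟩
    rw [hcon] at this
    exact this
  obtain ⟨y, hy, hyU⟩ := h2
  obtain ⟨x, -, hxU, hxc⟩ := hs U (closure U)ᶜ hU isClosed_closure.isOpen_compl
    (fun x hx => by
      by_cases hc : x ∈ closure U
      · exact Or.inl (hno x hx hc)
      · exact Or.inr hc)
    h1 ⟨y, hy, fun hc => hyU (hno y hy hc)⟩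
  exact hxc (subset_closure hxU)

lemma kobayashi_set_nonempty {n : ℕ} {D : Set (Cn n)} (hD : IsOpen D) {z : Cn n} (hz : z ∈ D)
    (X : Cn n) : {c : ℝ | ∃ α : ℂ, c = ‖α‖ ∧ ∃ f : ℂ → Cn n,
    DifferentiableOn ℂ f (ball (0:ℂ) 1) ∧ MapsTo f (ball (0:ℂ) 1) D ∧
    f 0 = z ∧ α • deriv f 0 = X}.Nonempty := by
  obtain ⟨R, hR, hb⟩ := Metric.isOpen_iff.1 hD z hz
  set c : ℝ := R / (‖X‖ + 1) with hc
  have hX : 0 < ‖X‖ + 1 := by positivity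
  have hc0 : 0 < c := by positivity
  have hcC : (c : ℂ) ≠ 0 := by exact_mod_cast hc0.ne'
  refine ⟨_, (c : ℂ)⁻¹, rfl, fun ζ => z + ζ • ((c : ℂ) • X), ?_, ?_, by simp, ?_⟩
  · fun_prop
  · intro ζ hζ
    have hζ1 : ‖ζ‖ < 1 := by simpa using hζ
    apply hb
    rw [mem_ball, dist_eq_norm, add_sub_cancel_left, norm_smul, norm_smul, Complex.norm_real,
      Real.norm_of_nonneg hc0.le]
    have h1 : c * ‖X‖ < R := by
      rw [hc, div_mul_eq_mul_div, div_lt_iff₀ hX]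
      nlinarith
    have h2 : 0 ≤ c * ‖X‖ := by positivity
    nlinarith
  · have : HasDerivAt (fun ζ : ℂ => z + ζ • ((c : ℂ) • X)) ((1:ℂ) • ((c : ℂ) • X)) 0 :=
      ((hasDerivAt_id (0:ℂ)).smul_const _).const_add z
    rw [this.deriv, one_smul, smul_smul, inv_mul_cancel₀ hcC, one_smul]

/-- Localization of the Kobayashi metric via the pluricomplex Green
function: `K_D(z;X) ≥ K_{D∩U}(z;X) · inf_{w ∈ D ∩ ∂U} exp(g_D(w,z))`. -/
theorem kobayashi_green_localization {n : ℕ} (D : Set (Cn n)) (hD : IsOpen D)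
    (hDconn : IsConnected D) (U : Set (Cn n)) (hU : IsOpen U)
    (hDU : (D ∩ U).Nonempty) (hDnU : (D \ U).Nonempty) :
    ∀ z ∈ D ∩ U, ∀ X : Cn n,
      kobayashi D z X ≥
        kobayashi (D ∩ U) z X * sInf ((fun w => erexp (greenFn D w z)) '' (D ∩ frontier U)) := by

  intro z hz X
  have hKbdd : ∀ (E : Set (Cn n)), BddBelow {c : ℝ | ∃ α : ℂ, c = ‖α‖ ∧ ∃ f : ℂ → Cn n,
      DifferentiableOn ℂ f (ball (0:ℂ) 1) ∧ MapsTo f (ball (0:ℂ) 1) E ∧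
      f 0 = z ∧ α • deriv f 0 = X} := by
    intro E
    refine ⟨0, ?_⟩
    rintro _ ⟨α, rfl, -⟩
    exact norm_nonneg _
  set S := (fun w => erexp (greenFn D w z)) '' (D ∩ frontier U) with hS
  have hS0 : ∀ x ∈ S, 0 ≤ x := by
    rintro _ ⟨w, -, rfl⟩; exact erexp_nonneg _
  have hSb : BddBelow S := ⟨0, hS0⟩
  obtain ⟨w₀, hw₀⟩ := exists_frontier hDconn.isPreconnected hU hDU hDnU
  have hm0 : 0 ≤ sInf S := Real.sInf_nonneg hS0
  have hm1 : sInf S ≤ 1 := by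
    refine (csInf_le hSb ⟨w₀, hw₀, rfl⟩).trans (erexp_le one_pos ?_)
    rw [Real.log_one]
    refine sSup_le ?_
    rintro _ ⟨u, -, hneg, -, rfl⟩
    exact (hneg z hz.1).le
  set m := sInf S with hm
  refine le_csInf (kobayashi_set_nonempty hD hz.1 X) ?_
  rintro _ ⟨α, rfl, f, hf, hfD, hf0, hα⟩
  rcases hm0.eq_or_lt with h0 | hmpos
  · rw [← h0, mul_zero]; exact norm_nonneg _
  have hsub : ball (0:ℂ) m ⊆ ball 0 1 := ball_subset_ball hm1
  have hmaps : ∀ ζ ∈ ball (0:ℂ) m, f ζ ∈ U := by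
    by_contra hcon
    push Not at hcon
    obtain ⟨ζ₁, hζ₁, hζ₁U⟩ := hcon
    have hpre : IsPreconnected (f '' ball (0:ℂ) m) :=
      (convex_ball (0:ℂ) m).isPreconnected.image f (hf.continuousOn.mono hsub)
    obtain ⟨_, ⟨a, ha, rfl⟩, hfr⟩ := exists_frontier hpre hU
      ⟨z, ⟨0, by simpa using hmpos, hf0⟩, hz.2⟩ ⟨f ζ₁, ⟨ζ₁, hζ₁, rfl⟩, hζ₁U⟩
    have haU : f a ∉ U := by
      rw [hU.frontier_eq] at hfr; exact hfr.2
    have hne : f 0 ≠ f a := by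
      intro h; rw [← h, hf0] at haU; exact haU hz.2
    have ha0 : a ≠ 0 := by rintro rfl; exact hne rfl
    have ham : ‖a‖ < m := by simpa using ha
    have hg := green_le_s10 hD hf hfD ha0 (ham.trans_le hm1) hne
    rw [hf0] at hg
    have h1 : m ≤ erexp (greenFn D (f a) z) := csInf_le hSb ⟨f a, ⟨hfD (hsub ha), hfr⟩, rfl⟩
    have h2 := erexp_le (norm_pos_iff.2 ha0) hg
    linarith
  have hmC : (m : ℂ) ≠ 0 := by exact_mod_cast hmpos.ne'
  have hscale : MapsTo (fun ζ : ℂ => (m : ℂ) * ζ) (ball 0 1) (ball 0 m) := by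
    intro ζ hζ
    have hζ1 : ‖ζ‖ < 1 := by simpa using hζ
    rw [mem_ball_zero_iff, norm_mul, Complex.norm_real, Real.norm_of_nonneg hm0]
    nlinarith
  have hmem : kobayashi (D ∩ U) z X ≤ ‖α / (m : ℂ)‖ := by
    refine csInf_le (hKbdd _) ⟨_, rfl, fun ζ => f ((m : ℂ) * ζ), ?_, ?_, by simpa using hf0, ?_⟩
    · exact hf.comp (by fun_prop) (hscale.mono_right hsub)
    · intro ζ hζ
      exact ⟨hfD (hsub (hscale hζ)), hmaps _ (hscale hζ)⟩
    · have hd : HasDerivAt f (deriv f 0) ((m : ℂ) * 0) := by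
        rw [mul_zero]
        exact (hf.differentiableAt (isOpen_ball.mem_nhds (by simp))).hasDerivAt
      have hl : HasDerivAt (fun ζ : ℂ => (m : ℂ) * ζ) (m : ℂ) 0 := by
        simpa using (hasDerivAt_id (0:ℂ)).const_mul (m : ℂ)
      have h := hd.scomp (0:ℂ) hl
      have h' : deriv (fun ζ => f ((m : ℂ) * ζ)) 0 = (m : ℂ) • deriv f 0 := h.deriv
      rw [h', smul_smul, div_mul_cancel₀ _ hmC, hα]
  rw [norm_div, Complex.norm_real, Real.norm_of_nonneg hm0, le_div_iff₀ hmpos] at hmem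
  exact hmem
end
end
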